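/- Assume the stated hypotheses on Ω and u. Then the normal derivative of u is bounded from below near the boundary: there exists K > 0 such that u_ν(x,t) = ∇u(x,t)·ν(x) ≥ −K for all x ∈ Ω_{δ₀} and all t ∈ (0, T). -/

import Mathlib

open Set Metric Filter RealInnerProductSpace

noncomputable section

/-- A set `Ω ⊆ ℝⁿ` has boundary of class `C²`: near each boundary point, `Ω` is the strict
sublevel set of a `C²` function with nonvanishing gradient (equivalently, after a rigid motion,
the boundary is locally the graph of a `C²` function with `Ω` strictly on one side). -/
def IsC2Boundary {n : ℕ} (Ω : Set (EuclideanSpace ℝ (Fin n))) : Prop :=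
  ∀ x ∈ frontier Ω, ∃ f : EuclideanSpace ℝ (Fin n) → ℝ, ∃ U ∈ nhds x,
    ContDiffOn ℝ 2 f U ∧ (∀ y ∈ U, fderiv ℝ f y ≠ 0) ∧
    U ∩ Ω = U ∩ {y | f y < 0} ∧ U ∩ frontier Ω = U ∩ {y | f y = 0}

/-!
The proof doubles the spatial variable. Let `X` be a smooth vector field close to the inward normal
at the boundary, and compare `u` at `x` and at `y = x - h * (X x + e / 2)`, where `e` is a unit
vector and `h > 0` is small. If `(x, e, t)` is an interior maximum of
`u y t - (1 - h * B) * u x t - h * A * t`, then the first order conditions in `x` and `e` relate the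
two gradients up to an error of order `h`, and translating `x` while rotating `e` so that `y` moves
almost in parallel shows that the two Laplacians differ, up to the factor `1 - h * B`, by `O(h)`
times a multiple of `1 + |∇u|`. As `|∇u| ^ p` is superlinear, a large damping rate `B` absorbs this
error, and a large `A` contradicts the equation.

So the maximum is attained at the initial time, where `u` is regular, or at `y ∈ ∂Ω`, where
`u y = 0` and a barrier gives `-u x ≤ O(|x - y|)`; in both cases it is `O(h)`. Dividing by `h` and
letting `h → 0` bounds `-∇u x · (X x + e / 2)` from above for every `e`, and near the boundary some
positive multiple of the normal is of the form `X x + e / 2`.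
-/

section TwoJet

variable {F : Type*} [NormedAddCommGroup F] [NormedSpace ℝ F]

/-- The curve `φ` is differentiable near `0` with first derivative `d` and second derivative `c` at
`0`. Second order variations are computed with this predicate. -/
def HasTwoJet (φ : ℝ → F) (d c : F) : Prop :=
  ∃ φ' : ℝ → F, (∀ᶠ s in nhds 0, HasDerivAt φ (φ' s) s) ∧ φ' 0 = d ∧ HasDerivAt φ' c 0

namespace HasTwoJet

theorem hasDerivAt {φ : ℝ → F} {d c : F} (h : HasTwoJet φ d c) : HasDerivAt φ d 0 := by
  obtain ⟨φ', hφ, rfl, -⟩ := h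
  exact hφ.self_of_nhds

theorem const (x : F) : HasTwoJet (fun _ => x) 0 0 :=
  ⟨fun _ => 0, Eventually.of_forall fun s => hasDerivAt_const s x, rfl, hasDerivAt_const 0 0⟩

theorem smul_const_id (v : F) : HasTwoJet (fun s => s • v) v 0 :=
  ⟨fun _ => v, Eventually.of_forall fun s => by simpa using (hasDerivAt_id s).smul_const v, rfl,
    hasDerivAt_const 0 v⟩

theorem add {φ ψ : ℝ → F} {d e c k : F} (hφ : HasTwoJet φ d c) (hψ : HasTwoJet ψ e k) :
    HasTwoJet (fun s => φ s + ψ s) (d + e) (c + k) := by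
  obtain ⟨φ', hφ₁, rfl, hφ₂⟩ := hφ
  obtain ⟨ψ', hψ₁, rfl, hψ₂⟩ := hψ
  exact ⟨fun s => φ' s + ψ' s, by filter_upwards [hφ₁, hψ₁] with s using HasDerivAt.fun_add, rfl,
    hφ₂.fun_add hψ₂⟩

theorem const_smul {φ : ℝ → F} {d c : F} (a : ℝ) (hφ : HasTwoJet φ d c) :
    HasTwoJet (fun s => a • φ s) (a • d) (a • c) := by
  obtain ⟨φ', hφ₁, rfl, hφ₂⟩ := hφ
  exact ⟨fun s => a • φ' s, hφ₁.mono fun s hs => hs.fun_const_smul a, rfl, hφ₂.fun_const_smul a⟩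

theorem sub {φ ψ : ℝ → F} {d e c k : F} (hφ : HasTwoJet φ d c) (hψ : HasTwoJet ψ e k) :
    HasTwoJet (fun s => φ s - ψ s) (d - e) (c - k) := by
  simpa [sub_eq_add_neg] using hφ.add (hψ.const_smul (-1))

theorem line (x v : F) : HasTwoJet (fun s => x + s • v) v 0 := by
  simpa using (const x).add (smul_const_id v)

theorem smul_const {φ : ℝ → ℝ} {d c : ℝ} (hφ : HasTwoJet φ d c) (x : F) :
    HasTwoJet (fun s => φ s • x) (d • x) (c • x) := by
  obtain ⟨φ', hφ₁, rfl, hφ₂⟩ := hφ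
  exact ⟨fun s => φ' s • x, hφ₁.mono fun s hs => hs.smul_const x, rfl, hφ₂.smul_const x⟩

theorem fderiv_line {E : Type*} [NormedAddCommGroup E] [NormedSpace ℝ E] {X : E → F}
    (hX : ContDiff ℝ 2 X) (x v : E) :
    HasTwoJet (fun s => X (x + s • v)) (fderiv ℝ X x v) (fderiv ℝ (fderiv ℝ X) x v v) := by
  have hline (s : ℝ) : HasDerivAt (fun s => x + s • v) v s := by
    simpa using ((hasDerivAt_id s).smul_const v).const_add x
  have hX' : Differentiable ℝ (fderiv ℝ X) :=
    (hX.fderiv_right (m := 1) (by norm_num)).differentiable one_ne_zero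
  refine ⟨fun s => fderiv ℝ X (x + s • v) v, Eventually.of_forall fun s =>
    (hX.differentiable two_ne_zero _).hasFDerivAt.comp_hasDerivAt s (hline s), by simp, ?_⟩
  have h := (hX' (x + (0 : ℝ) • v)).hasFDerivAt.comp_hasDerivAt 0 (hline 0)
  simpa using h.clm_apply (hasDerivAt_const 0 v)

theorem eq_zero_and_nonpos_of_isLocalMax {φ : ℝ → ℝ} {d c : ℝ} (hφ : HasTwoJet φ d c)
    (hmax : IsLocalMax φ 0) : d = 0 ∧ c ≤ 0 := by
  obtain ⟨φ', hφ₁, rfl, hφ₂⟩ := hφ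
  have hd : φ' 0 = 0 := hmax.hasDerivAt_eq_zero hφ₁.self_of_nhds
  have hderiv : deriv φ =ᶠ[nhds 0] φ' := hφ₁.mono fun s hs => hs.deriv
  have hc : deriv (deriv φ) 0 = c := hderiv.deriv_eq.trans hφ₂.deriv
  refine ⟨hd, not_lt.1 fun hpos => ?_⟩
  -- If `c > 0` then `0` is also a local minimum, so `φ` is locally constant and `c = 0`.
  have hmin : IsLocalMin φ 0 := isLocalMin_of_deriv_deriv_pos (hc ▸ hpos)
    (hderiv.self_of_nhds.trans hd) hφ₁.self_of_nhds.continuousAt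
  have hconst : φ =ᶠ[nhds 0] fun _ => φ 0 := by
    filter_upwards [hmin, hmax] with s using ge_antisymm
  have hzero : deriv (deriv φ) 0 = 0 := by simpa using hconst.deriv.deriv_eq
  exact hpos.ne' (hc.symm.trans hzero)

end HasTwoJet

end TwoJet

section Hessian

variable {E : Type*} [NormedAddCommGroup E] [InnerProductSpace ℝ E] [CompleteSpace E]

/-- `G` is the gradient field of `U` near `x`, and `A` is the Hessian of `U` at `x`, seen as a
linear map. -/
def HasHessianAt (U : E → ℝ) (G : E → E) (A : E →L[ℝ] E) (x : E) : Prop :=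
  (∀ᶠ z in nhds x, HasGradientAt U (G z) z) ∧ HasFDerivAt G A x

theorem HasHessianAt.const_mul {U : E → ℝ} {G : E → E} {A : E →L[ℝ] E} {x : E}
    (h : HasHessianAt U G A x) (a : ℝ) :
    HasHessianAt (fun z => a * U z) (fun z => a • G z) (a • A) x := by
  refine ⟨h.1.mono fun z hz => ?_, h.2.const_smul a⟩
  rw [hasGradientAt_iff_hasFDerivAt, map_smul]
  exact (hasGradientAt_iff_hasFDerivAt.1 hz).const_mul a

theorem HasHessianAt.sub {U V : E → ℝ} {P R : E → E} {A B : E →L[ℝ] E} {x : E}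
    (hU : HasHessianAt U P A x) (hV : HasHessianAt V R B x) :
    HasHessianAt (fun z => U z - V z) (fun z => P z - R z) (A - B) x := by
  refine ⟨?_, hU.2.sub hV.2⟩
  filter_upwards [hU.1, hV.1] with z hUz hVz
  rw [hasGradientAt_iff_hasFDerivAt, map_sub]
  exact (hasGradientAt_iff_hasFDerivAt.1 hUz).sub (hasGradientAt_iff_hasFDerivAt.1 hVz)

theorem HasTwoJet.comp_hasHessianAt {U : E → ℝ} {G : E → E} {A : E →L[ℝ] E}
    {γ : ℝ → E} {v a : E} (hγ : HasTwoJet γ v a) (hU : HasHessianAt U G A (γ 0)) :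
    HasTwoJet (fun s => U (γ s)) ⟪G (γ 0), v⟫ (⟪A v, v⟫ + ⟪G (γ 0), a⟫) := by
  obtain ⟨γ', hγ₁, rfl, hγ₂⟩ := hγ
  have hγ₀ := hγ₁.self_of_nhds
  refine ⟨fun s => ⟪G (γ s), γ' s⟫, ?_, rfl, ?_⟩
  · filter_upwards [hγ₁, hγ₀.continuousAt.eventually hU.1] with s hs hUs
    simpa using! (hasGradientAt_iff_hasFDerivAt.1 hUs).comp_hasDerivAt s hs
  · simpa [add_comm] using (hU.2.comp_hasDerivAt 0 hγ₀).inner ℝ hγ₂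

theorem HasHessianAt.inner_nonpos_of_isLocalMax {U : E → ℝ} {G : E → E}
    {A : E →L[ℝ] E} {x : E} (hU : HasHessianAt U G A x) (hmax : IsLocalMax U x) (v : E) :
    ⟪A v, v⟫ ≤ 0 := by
  have hx : x + (0 : ℝ) • v = x := by simp
  have hmax' : IsLocalMax (fun s : ℝ => U (x + s • v)) 0 :=
    IsMaxFilter.comp_tendsto (hx.symm ▸ hmax)
      (Continuous.tendsto (f := fun s : ℝ => x + s • v) (by fun_prop) 0)
  have hjet := (HasTwoJet.line x v).comp_hasHessianAt (hx.symm ▸ hU)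
  simpa using (hjet.eq_zero_and_nonpos_of_isLocalMax hmax').2

end Hessian

theorem HasHessianAt.trace_nonpos_of_isLocalMax {E : Type*} [NormedAddCommGroup E]
    [InnerProductSpace ℝ E] [FiniteDimensional ℝ E] {U : E → ℝ} {G : E → E} {A : E →L[ℝ] E} {x : E}
    (hU : HasHessianAt U G A x) (hmax : IsLocalMax U x) :
    LinearMap.trace ℝ E A ≤ 0 := by
  rw [LinearMap.trace_eq_sum_inner _ (stdOrthonormalBasis ℝ E)]
  refine Finset.sum_nonpos fun i _ => ?_
  simpa [real_inner_comm] using hU.inner_nonpos_of_isLocalMax hmax (stdOrthonormalBasis ℝ E i)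

section GreatCircle

variable {E : Type*} [NormedAddCommGroup E] [InnerProductSpace ℝ E]

/-- The great circle through `ω` with velocity `w`, on the sphere of radius `‖ω‖`. For `w = 0` it is
the constant curve, thanks to the convention `sin 0 / 0 = 0`. -/
def greatCircle (ω w : E) (s : ℝ) : E :=
  Real.cos (‖w‖ / ‖ω‖ * s) • ω + (Real.sin (‖w‖ / ‖ω‖ * s) / (‖w‖ / ‖ω‖)) • w

theorem greatCircle_zero (ω w : E) : greatCircle ω w 0 = ω := by simp [greatCircle]

theorem norm_greatCircle {ω w : E} (h : ⟪ω, w⟫ = 0) (hω : ω ≠ 0) (s : ℝ) :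
    ‖greatCircle ω w s‖ = ‖ω‖ := by
  rcases eq_or_ne w 0 with rfl | hw
  · simp [greatCircle]
  have hω' := norm_ne_zero_iff.2 hω
  have hw' := norm_ne_zero_iff.2 hw
  rw [← sq_eq_sq₀ (norm_nonneg _) (norm_nonneg _), greatCircle, norm_add_sq_real, norm_smul,
    norm_smul, real_inner_smul_left, real_inner_smul_right, h, mul_pow, mul_pow, Real.norm_eq_abs,
    Real.norm_eq_abs, sq_abs, sq_abs, div_pow, div_pow]
  field_simp
  linear_combination ‖w‖ * ‖ω‖ * Real.cos_sq_add_sin_sq (‖w‖ * s / ‖ω‖)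

theorem hasTwoJet_greatCircle {ω : E} (hω : ω ≠ 0) (w : E) :
    HasTwoJet (greatCircle ω w) w (-(‖w‖ ^ 2 / ‖ω‖ ^ 2) • ω) := by
  have hω' := norm_ne_zero_iff.2 hω
  set k : ℝ := ‖w‖ / ‖ω‖ with hk
  have hlin (s : ℝ) : HasDerivAt (fun s => k * s) k s := by
    simpa using (hasDerivAt_id s).const_mul k
  have hcos : HasTwoJet (fun s => Real.cos (k * s)) 0 (-k ^ 2) := by
    refine ⟨fun s => -Real.sin (k * s) * k, Eventually.of_forall fun s => (hlin s).cos, by simp, ?_⟩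
    convert! (hlin 0).sin.neg.mul_const k using 1
    simp [pow_two]
  have hsin : HasTwoJet (fun s => Real.sin (k * s) / k) (k / k) 0 := by
    refine ⟨fun s => Real.cos (k * s) * k / k,
      Eventually.of_forall fun s => (hlin s).sin.div_const k, by simp, ?_⟩
    simpa using ((hlin 0).cos.mul_const k).div_const k
  have hw : (k / k) • w = w := by
    rcases eq_or_ne w 0 with rfl | hw
    · exact smul_zero _
    · rw [div_self (div_ne_zero (norm_ne_zero_iff.2 hw) hω'), one_smul]
  have h := (hcos.smul_const ω).add (hsin.smul_const w)
  rw [hw, zero_smul ℝ ω, zero_smul ℝ w, zero_add, add_zero, hk, div_pow] at h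
  exact h

end GreatCircle

section Rotation

variable {E : Type*} [NormedAddCommGroup E] [InnerProductSpace ℝ E]

theorem reflection_singleton_apply_of_norm_eq_one {m : E} (hm : ‖m‖ = 1) (v : E) :
    (ℝ ∙ m).reflection v = (2 * ⟪m, v⟫) • m - v := by
  rw [Submodule.reflection_singleton_apply]
  simp [hm, two_smul, two_mul, add_smul]

theorem norm_reflection_singleton_sub_le {m n : E} (hm : ‖m‖ = 1) (hn : ‖n‖ = 1) (v : E) :
    ‖(ℝ ∙ m).reflection v - (ℝ ∙ n).reflection v‖ ≤ 4 * ‖m - n‖ * ‖v‖ := by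
  have hsplit : (ℝ ∙ m).reflection v - (ℝ ∙ n).reflection v =
      (2 * ⟪m - n, v⟫) • m + (2 * ⟪n, v⟫) • (m - n) := by
    rw [reflection_singleton_apply_of_norm_eq_one hm, reflection_singleton_apply_of_norm_eq_one hn,
      inner_sub_left]
    module
  have hmn := abs_real_inner_le_norm (m - n) v
  have hnv : |⟪n, v⟫| ≤ ‖v‖ := by simpa [hn] using abs_real_inner_le_norm n v
  calc _ ≤ 2 * |⟪m - n, v⟫| + 2 * |⟪n, v⟫| * ‖m - n‖ := by
        rw [hsplit]
        refine (norm_add_le _ _).trans_eq ?_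
        simp [norm_smul, hm]
    _ ≤ 2 * (‖m - n‖ * ‖v‖) + 2 * ‖v‖ * ‖m - n‖ := by gcongr
    _ = 4 * ‖m - n‖ * ‖v‖ := by ring

theorem exists_unit_bisector {m n : E} (hm : ‖m‖ = 1) (hn : ‖n‖ = 1) (h : m + n ≠ 0) :
    ∃ u : E, ‖u‖ = 1 ∧ (2 * ⟪u, m⟫) • u = m + n ∧ ‖u - n‖ ≤ ‖m - n‖ := by
  set t := ‖m + n‖ with ht
  have ht₀ : 0 < t := norm_pos_iff.2 h
  have ht₂ : t ≤ 2 := (norm_add_le m n).trans_eq (by rw [hm, hn]; norm_num)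
  have ht_sq : t ^ 2 = 2 + 2 * ⟪m, n⟫ := by rw [ht, norm_add_sq_real, hm, hn]; ring
  have hu : ‖t⁻¹ • (m + n)‖ = 1 := by
    rw [norm_smul, ← ht, norm_inv, Real.norm_of_nonneg ht₀.le, inv_mul_cancel₀ ht₀.ne']
  have hum : 2 * ⟪t⁻¹ • (m + n), m⟫ = t := by
    rw [real_inner_smul_left, inner_add_left, real_inner_self_eq_norm_sq, hm, real_inner_comm m n]
    field_simp
    linarith
  have hun : 2 * ⟪t⁻¹ • (m + n), n⟫ = t := by
    rw [real_inner_smul_left, inner_add_left, real_inner_self_eq_norm_sq, hn]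
    field_simp
    linarith
  refine ⟨t⁻¹ • (m + n), hu, by rw [hum, smul_inv_smul₀ ht₀.ne'],
    le_of_sq_le_sq ?_ (norm_nonneg _)⟩
  rw [norm_sub_sq_real, norm_sub_sq_real, hu, hm, hn]
  nlinarith

theorem exists_linearIsometryEquiv_norm_sub_le {m n : E} (hm : ‖m‖ = 1) (hn : ‖n‖ = 1) :
    ∃ Q : E ≃ₗᵢ[ℝ] E, Q m = n ∧ ∀ v, ‖Q v - v‖ ≤ 4 * ‖m - n‖ * ‖v‖ := by
  rcases eq_or_ne (m + n) 0 with h₀ | h₀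
  · obtain rfl := eq_neg_of_add_eq_zero_left h₀
    refine ⟨LinearIsometryEquiv.neg ℝ, by simp, fun v => ?_⟩
    have hdist : ‖-n - n‖ = 2 := by rw [← neg_add', norm_neg, ← two_smul ℝ, norm_smul, hn]; simp
    calc ‖-v - v‖ ≤ ‖v‖ + ‖v‖ := by simpa using norm_sub_le (-v) v
      _ ≤ 4 * ‖-n - n‖ * ‖v‖ := by rw [hdist]; linarith [norm_nonneg v]
  obtain ⟨u, hu, hum, hun⟩ := exists_unit_bisector hm hn h₀
  refine ⟨(ℝ ∙ u).reflection.trans (ℝ ∙ n).reflection, ?_, fun v => ?_⟩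
  · rw [LinearIsometryEquiv.trans_apply, reflection_singleton_apply_of_norm_eq_one hu, hum,
      add_sub_cancel_left]
    exact Submodule.reflection_mem_subspace_eq_self (Submodule.mem_span_singleton_self n)
  · calc ‖(ℝ ∙ n).reflection ((ℝ ∙ u).reflection v) - v‖
        = ‖(ℝ ∙ u).reflection v - (ℝ ∙ n).reflection v‖ := by
          rw [← (ℝ ∙ n).reflection.norm_map ((ℝ ∙ u).reflection v - _), map_sub,
            Submodule.reflection_reflection]
      _ ≤ 4 * ‖u - n‖ * ‖v‖ := norm_reflection_singleton_sub_le hu hn v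
      _ ≤ 4 * ‖m - n‖ * ‖v‖ := by gcongr

end Rotation

theorem sum_inner_isometry_eq_trace {E ι : Type*} [NormedAddCommGroup E] [InnerProductSpace ℝ E]
    [Fintype ι] (b : OrthonormalBasis ι ℝ E) (Q : E ≃ₗᵢ[ℝ] E) (A : E →L[ℝ] E) :
    ∑ i, ⟪A (Q (b i)), Q (b i)⟫ = LinearMap.trace ℝ E A := by
  simp [LinearMap.trace_eq_sum_inner _ (b.map Q), real_inner_comm]

section TwoPoint

variable {E : Type*} [NormedAddCommGroup E]

/-- The point `y = x - h (X x + e / 2)` that is compared with `x` in the two-point maximum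
principle. Here `h` is the size of the step, and the unit vector `e` is free. -/
def shift [NormedSpace ℝ E] (X : E → E) (h : ℝ) (x e : E) : E :=
  x - h • (X x + (1 / 2 : ℝ) • e)

variable [InnerProductSpace ℝ E]

/-- The constant in the error term of the two-point maximum principle in `E`, where `d` bounds the
first two derivatives of the direction field. -/
def twoPointConst (E : Type*) [NormedAddCommGroup E] [InnerProductSpace ℝ E] (d : ℝ) : ℝ :=
  Module.finrank ℝ E * (d + 200 * d ^ 2)

theorem twoPointConst_nonneg {d : ℝ} (hd : 0 ≤ d) : 0 ≤ twoPointConst E d := by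
  unfold twoPointConst
  positivity

theorem hasTwoJet_shift {X : E → E} (hX : ContDiff ℝ 2 X) (h : ℝ) (x : E) {e : E} (he : ‖e‖ = 1)
    (v w : E) :
    HasTwoJet (fun s => shift X h (x + s • v) (greatCircle e w s))
      (v - h • (fderiv ℝ X x v + (1 / 2 : ℝ) • w))
      (-(h • (fderiv ℝ (fderiv ℝ X) x v v - (‖w‖ ^ 2 / 2) • e))) := by
  have he₀ : e ≠ 0 := norm_ne_zero_iff.1 (by simp [he])
  have hjet := (HasTwoJet.line x v).sub (((HasTwoJet.fderiv_line hX x v).add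
    ((hasTwoJet_greatCircle he₀ w).const_smul (1 / 2))).const_smul h)
  convert! hjet using 1
  rw [he]
  module

theorem variation_of_isLocalMaxOn [CompleteSpace E] {X : E → E} (hX : ContDiff ℝ 2 X) {U V : E → ℝ}
    {P R : E → E} {A B : E →L[ℝ] E} {h : ℝ} {x e : E} (he : ‖e‖ = 1)
    (hU : HasHessianAt U P A (shift X h x e)) (hV : HasHessianAt V R B x)
    (hmax : IsLocalMaxOn (fun q : E × E => U (shift X h q.1 q.2) - V q.1)
      (univ ×ˢ sphere 0 1) (x, e)) {v w : E} (hw : ⟪e, w⟫ = 0) :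
    let r := v - h • (fderiv ℝ X x v + (1 / 2 : ℝ) • w)
    ⟪P (shift X h x e), r⟫ - ⟪R x, v⟫ = 0 ∧
      ⟪A r, r⟫ + ⟪P (shift X h x e), -(h • (fderiv ℝ (fderiv ℝ X) x v v - (‖w‖ ^ 2 / 2) • e))⟫ -
        ⟪B v, v⟫ ≤ 0 := by
  have he₀ : e ≠ 0 := norm_ne_zero_iff.1 (by simp [he])
  have hx₀ : x + (0 : ℝ) • v = x := by simp
  have hy₀ : shift X h (x + (0 : ℝ) • v) (greatCircle e w 0) = shift X h x e := by
    rw [hx₀, greatCircle_zero]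
  have hjet := ((hasTwoJet_shift hX h x he v w).comp_hasHessianAt (hy₀.symm ▸ hU)).sub
    ((HasTwoJet.line x v).comp_hasHessianAt (hx₀.symm ▸ hV))
  have hcurve : Tendsto (fun s => (x + s • v, greatCircle e w s)) (nhds 0)
      (nhdsWithin (x, e) (univ ×ˢ sphere 0 1)) := by
    refine tendsto_nhdsWithin_iff.2 ⟨?_, Eventually.of_forall fun s => ?_⟩
    · have := (HasTwoJet.line x v).hasDerivAt.continuousAt.prodMk
        (hasTwoJet_greatCircle he₀ w).hasDerivAt.continuousAt
      simpa [ContinuousAt, greatCircle_zero] using this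
    · simp [norm_greatCircle hw he₀, he]
  have hmax' : IsLocalMax (fun s : ℝ => U (shift X h (x + s • v) (greatCircle e w s)) -
      V (x + s • v)) 0 := by
    filter_upwards [hcurve.eventually hmax] with s hs
    simpa [greatCircle_zero] using hs
  simpa [greatCircle_zero] using hjet.eq_zero_and_nonpos_of_isLocalMax hmax'

theorem eq_inner_smul_of_forall_inner_eq_zero {g e : E} (he : ‖e‖ = 1)
    (hg : ∀ w, ⟪e, w⟫ = 0 → ⟪g, w⟫ = 0) : g = ⟪g, e⟫ • e := by
  have hperp : ⟪e, g - ⟪g, e⟫ • e⟫ = 0 := by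
    simp [inner_sub_right, inner_smul_right, he, real_inner_comm]
  have hself : ⟪g - ⟪g, e⟫ • e, g - ⟪g, e⟫ • e⟫ = 0 := by
    rw [inner_sub_left, real_inner_smul_left, hg _ hperp, hperp, mul_zero, sub_zero]
  exact sub_eq_zero.1 (inner_self_eq_zero.1 hself)

theorem neg_le_inner_shift_correction {g c e w v : E} {h d : ℝ} (hh : 0 ≤ h) (he : ‖e‖ = 1)
    (hv : ‖v‖ = 1) (hc : ‖c‖ ≤ d) (hw : ‖w‖ ≤ 20 * d * ‖v‖) :
    -(h * ‖g‖ * (d + 200 * d ^ 2)) ≤ ⟪g, -(h • (c - (‖w‖ ^ 2 / 2) • e))⟫ := by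
  have hcorr : ‖c - (‖w‖ ^ 2 / 2) • e‖ ≤ d + 200 * d ^ 2 := by
    calc ‖c - (‖w‖ ^ 2 / 2) • e‖ ≤ ‖c‖ + ‖w‖ ^ 2 / 2 :=
          (norm_sub_le _ _).trans_eq (by simp [norm_smul, he])
      _ ≤ d + (20 * d * ‖v‖) ^ 2 / 2 := by gcongr
      _ = d + 200 * d ^ 2 := by rw [hv]; ring
  rw [inner_neg_right, inner_smul_right, neg_le_neg_iff, mul_assoc]
  gcongr
  exact (real_inner_le_norm _ _).trans (by gcongr)

variable [CompleteSpace E]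

theorem norm_sub_smul_adjoint_sub_le {D : E →L[ℝ] E} {d h : ℝ} {e : E} (hD : ‖D‖ ≤ d)
    (hh : 0 ≤ h) (he : ‖e‖ = 1) : ‖e - h • D.adjoint e - e‖ ≤ h * d := by
  have hadj : ‖D.adjoint e‖ ≤ d := by
    simpa [he] using D.adjoint.le_of_opNorm_le (by rwa [LinearIsometryEquiv.norm_map]) e
  rw [sub_sub_cancel_left, norm_neg, norm_smul_of_nonneg hh]
  gcongr

theorem abs_norm_sub_smul_adjoint_sub_one_le {D : E →L[ℝ] E} {d h : ℝ} {e : E} (hD : ‖D‖ ≤ d)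
    (hh : 0 ≤ h) (he : ‖e‖ = 1) : |‖e - h • D.adjoint e‖ - 1| ≤ h * d := by
  rw [← he]
  exact (abs_norm_sub_norm_le _ _).trans (norm_sub_smul_adjoint_sub_le hD hh he)

theorem inner_sub_smul_adjoint (D : E →L[ℝ] E) (h : ℝ) (e v : E) :
    ⟪e - h • D.adjoint e, v⟫ = ⟪e, v - h • D v⟫ := by
  simp [inner_sub_left, inner_sub_right, real_inner_smul_left, inner_smul_right,
    ContinuousLinearMap.adjoint_inner_left]

theorem exists_isometry_norm_sub_le {D : E →L[ℝ] E} {d h : ℝ} {e : E} (hD : ‖D‖ ≤ d)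
    (hh : 0 ≤ h) (hhd : h * d ≤ 1 / 4) (he : ‖e‖ = 1) :
    ∃ Q : E ≃ₗᵢ[ℝ] E, Q (e - h • D.adjoint e) = ‖e - h • D.adjoint e‖ • e ∧
      ∀ v, ‖v - h • D v - ‖e - h • D.adjoint e‖ • Q v‖ ≤ 10 * (h * d) * ‖v‖ := by
  have hκ := abs_norm_sub_smul_adjoint_sub_one_le hD hh he
  set m := e - h • D.adjoint e
  set κ := ‖m‖
  have hκ₀ : 0 < κ := by linarith [(abs_le.1 hκ).1]
  have hκm : κ • κ⁻¹ • m = m := smul_inv_smul₀ hκ₀.ne' m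
  have hunit : ‖κ⁻¹ • m‖ = 1 := norm_smul_inv_norm (𝕜 := ℝ) (norm_pos_iff.1 hκ₀)
  have hclose : κ * ‖κ⁻¹ • m - e‖ ≤ 2 * (h * d) := by
    calc κ * ‖κ⁻¹ • m - e‖ = ‖(m - e) - (κ - 1) • e‖ := by
          rw [← norm_smul_of_nonneg hκ₀.le, smul_sub, hκm]
          congr 1
          module
      _ ≤ ‖m - e‖ + |κ - 1| := (norm_sub_le _ _).trans_eq (by simp [norm_smul, he])
      _ ≤ 2 * (h * d) := by
          have := norm_sub_smul_adjoint_sub_le hD hh he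
          linarith
  obtain ⟨Q, hQm, hQ⟩ := exists_linearIsometryEquiv_norm_sub_le hunit he
  refine ⟨Q, by rw [← hQm, ← map_smul, hκm], fun v => ?_⟩
  have hDv : ‖D v‖ ≤ d * ‖v‖ := D.le_of_opNorm_le hD v
  calc ‖v - h • D v - κ • Q v‖ = ‖-(κ • (Q v - v)) - (κ - 1) • v - h • D v‖ := by
        congr 1
        module
    _ ≤ κ * ‖Q v - v‖ + |κ - 1| * ‖v‖ + h * ‖D v‖ := by
        refine (norm_sub_le _ _).trans (add_le_add ((norm_sub_le _ _).trans ?_) ?_) <;>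
          simp [norm_smul, abs_of_nonneg, hh, hκ₀.le]
    _ ≤ κ * (4 * ‖κ⁻¹ • m - e‖ * ‖v‖) + h * d * ‖v‖ + h * (d * ‖v‖) := by
        gcongr
        exact hQ v
    _ = 4 * (κ * ‖κ⁻¹ • m - e‖) * ‖v‖ + 2 * (h * d) * ‖v‖ := by ring
    _ ≤ 4 * (2 * (h * d)) * ‖v‖ + 2 * (h * d) * ‖v‖ := by gcongr
    _ = 10 * (h * d) * ‖v‖ := by ring

theorem exists_isometry_admissible_variation {D : E →L[ℝ] E} {d h : ℝ} {e : E} (hD : ‖D‖ ≤ d)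
    (hh : 0 < h) (hhd : h * d ≤ 1 / 4) (he : ‖e‖ = 1) :
    ∃ Q : E ≃ₗᵢ[ℝ] E, ∀ v, ∃ w, ⟪e, w⟫ = 0 ∧ ‖w‖ ≤ 20 * d * ‖v‖ ∧
      v - h • (D v + (1 / 2 : ℝ) • w) = ‖e - h • D.adjoint e‖ • Q v := by
  obtain ⟨Q, hQm, hQ⟩ := exists_isometry_norm_sub_le hD hh.le hhd he
  set κ := ‖e - h • D.adjoint e‖
  refine ⟨Q, fun v => ⟨(2 / h) • (v - h • D v - κ • Q v), ?_, ?_, ?_⟩⟩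
  · have horth : ⟪e, κ • Q v⟫ = ⟪e, v - h • D v⟫ := by
      rw [← inner_sub_smul_adjoint, inner_smul_right, ← real_inner_smul_left, ← hQm,
        Q.inner_map_map]
    rw [inner_smul_right, inner_sub_right, horth, sub_self, mul_zero]
  · calc ‖(2 / h) • (v - h • D v - κ • Q v)‖ ≤ 2 / h * (10 * (h * d) * ‖v‖) := by
          rw [norm_smul_of_nonneg (by positivity)]
          gcongr
          exact hQ v
      _ = 20 * d * ‖v‖ := by field_simp; ring
  · have hcancel : h * (1 / 2) * (2 / h) = 1 := by field_simp
    rw [smul_add, smul_smul, smul_smul, hcancel]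
    module

theorem norm_eq_mul_of_forall_inner_sub_eq_zero {D : E →L[ℝ] E} {g R e : E} {h : ℝ} (hh : h ≠ 0)
    (he : ‖e‖ = 1) (hvar : ∀ v w : E, ⟪e, w⟫ = 0 →
      ⟪g, v - h • (D v + (1 / 2 : ℝ) • w)⟫ - ⟪R, v⟫ = 0) :
    ‖R‖ = ‖e - h • D.adjoint e‖ * ‖g‖ := by
  have hg : g = ⟪g, e⟫ • e := eq_inner_smul_of_forall_inner_eq_zero he fun w hw => by
    simpa [inner_smul_right, hh] using hvar 0 w hw
  have hR : R = ⟪g, e⟫ • (e - h • D.adjoint e) := ext_inner_right ℝ fun v => by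
    have hfirst := hvar v 0 (by simp)
    rw [smul_zero, add_zero] at hfirst
    rw [real_inner_smul_left, inner_sub_smul_adjoint, ← real_inner_smul_left, ← hg]
    exact (sub_eq_zero.1 hfirst).symm
  have hnorm : ‖g‖ = |⟪g, e⟫| := by
    rw [hg, norm_smul, he]
    simp [real_inner_smul_left, he]
  rw [hR, norm_smul, Real.norm_eq_abs, hnorm, mul_comm]

theorem two_point_maximum_principle {E : Type*} [NormedAddCommGroup E] [InnerProductSpace ℝ E]
    [FiniteDimensional ℝ E] {X : E → E} (hX : ContDiff ℝ 2 X) {U V : E → ℝ} {P R : E → E}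
    {A B : E →L[ℝ] E} {h d : ℝ} {x e : E} (hd₁ : ‖fderiv ℝ X x‖ ≤ d)
    (hd₂ : ‖fderiv ℝ (fderiv ℝ X) x‖ ≤ d) (hh : 0 < h) (hhd : h * d ≤ 1 / 4) (he : ‖e‖ = 1)
    (hU : HasHessianAt U P A (shift X h x e)) (hV : HasHessianAt V R B x)
    (hmax : IsLocalMaxOn (fun q : E × E => U (shift X h q.1 q.2) - V q.1)
      (univ ×ˢ sphere 0 1) (x, e)) :
    ∃ κ : ℝ, |κ - 1| ≤ h * d ∧ ‖R x‖ = κ * ‖P (shift X h x e)‖ ∧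
      κ ^ 2 * LinearMap.trace ℝ E A - LinearMap.trace ℝ E B ≤
        h * ‖P (shift X h x e)‖ * twoPointConst E d := by
  have hvar {v w : E} (hw : ⟪e, w⟫ = 0) := variation_of_isLocalMaxOn hX he hU hV hmax (v := v) hw
  set D := fderiv ℝ X x
  set g := P (shift X h x e)
  obtain ⟨Q, hQ⟩ := exists_isometry_admissible_variation hd₁ hh hhd he
  set κ := ‖e - h • D.adjoint e‖
  refine ⟨κ, abs_norm_sub_smul_adjoint_sub_one_le hd₁ hh.le he,
    norm_eq_mul_of_forall_inner_sub_eq_zero hh.ne' he fun v w hw => (hvar hw).1, ?_⟩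
  let b := stdOrthonormalBasis ℝ E
  have hsecond (i) : κ ^ 2 * ⟪A (Q (b i)), Q (b i)⟫ - ⟪B (b i), b i⟫ ≤
      h * ‖g‖ * (d + 200 * d ^ 2) := by
    obtain ⟨w, hw, hwd, hr⟩ := hQ (b i)
    have hi := (hvar (v := b i) hw).2
    have hc : ‖fderiv ℝ (fderiv ℝ X) x (b i) (b i)‖ ≤ d := by
      simpa using ContinuousLinearMap.le_of_opNorm₂_le_of_le _ hd₂ (b.norm_eq_one i).le
        (b.norm_eq_one i).le
    have := neg_le_inner_shift_correction (g := g) hh.le he (b.norm_eq_one i) hc hwd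
    rw [hr, map_smul, real_inner_smul_left, inner_smul_right] at hi
    linarith
  calc κ ^ 2 * LinearMap.trace ℝ E A - LinearMap.trace ℝ E B
      = ∑ i, (κ ^ 2 * ⟪A (Q (b i)), Q (b i)⟫ - ⟪B (b i), b i⟫) := by
        rw [Finset.sum_sub_distrib, ← Finset.mul_sum, sum_inner_isometry_eq_trace,
          ← sum_inner_isometry_eq_trace b (.refl ℝ E) B]
        rfl
    _ ≤ ∑ _i, h * ‖g‖ * (d + 200 * d ^ 2) := Finset.sum_le_sum fun i _ => hsecond i
    _ = h * ‖g‖ * twoPointConst E d := by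
        simp [twoPointConst]
        ring

end TwoPoint

section Superlinear

theorem one_add_mul_le_one_sub_rpow {p s : ℝ} (hp : 1 ≤ p) (hs : s < 1) :
    1 + (p - 1) * s ≤ (1 - s) ^ (1 - p) := by
  have ha : 0 < 1 - s := sub_pos.2 hs
  have hlog : s ≤ -Real.log (1 - s) := by linarith [Real.log_le_sub_one_of_pos ha]
  calc 1 + (p - 1) * s ≤ (p - 1) * -Real.log (1 - s) + 1 := by
        linarith [mul_le_mul_of_nonneg_left hlog (sub_nonneg.2 hp)]
    _ ≤ Real.exp ((p - 1) * -Real.log (1 - s)) := Real.add_one_le_exp _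
    _ = (1 - s) ^ (1 - p) := by rw [Real.rpow_def_of_pos ha]; ring_nf

theorem one_add_sub_le_one_sub_mul_rpow {p s κ ε : ℝ} (hp : 1 ≤ p) (hs₀ : 0 ≤ s) (hs : s < 1)
    (hps : (p - 1) * s ≤ 1) (hκ : |κ - 1| ≤ ε) (hε : ε ≤ 1) :
    1 + (p - 1) * s - 2 * (p * ε) ≤ (1 - s) * (κ / (1 - s)) ^ p := by
  have ha : 0 < 1 - s := sub_pos.2 hs
  obtain ⟨hκ₁, -⟩ := abs_le.1 hκ
  have hκ₀ : 0 ≤ κ := by linarith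
  have hε₀ : 0 ≤ ε := (abs_nonneg _).trans hκ
  have : 0 ≤ (p - 1) * s := mul_nonneg (sub_nonneg.2 hp) hs₀
  have hκp : 1 - p * ε ≤ κ ^ p := by
    have := one_add_mul_self_le_rpow_one_add (s := κ - 1) (by linarith) hp
    rw [add_sub_cancel] at this
    nlinarith
  calc 1 + (p - 1) * s - 2 * (p * ε) ≤ (1 + (p - 1) * s) * (1 - p * ε) := by
        nlinarith [mul_nonneg (zero_le_one.trans hp) hε₀]
    _ ≤ (1 + (p - 1) * s) * κ ^ p := by gcongr
    _ ≤ (1 - s) ^ (1 - p) * κ ^ p := by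
        gcongr
        exact one_add_mul_le_one_sub_rpow hp hs
    _ = (1 - s) * (κ / (1 - s)) ^ p := by
        rw [Real.div_rpow hκ₀ ha.le, Real.rpow_sub ha, Real.rpow_one]
        ring

/-- The factor `B` for which replacing `u x` by `(1 - h B) u x` makes the superlinear term win over
the errors of size `h` in the two-point maximum principle. -/
def dampingRate (p D C : ℝ) : ℝ := (2 * p * D + 3 * D + C) / (p - 1)

theorem dampingRate_nonneg {p D C : ℝ} (hp : 1 < p) (hD : 0 ≤ D) (hC : 0 ≤ C) :
    0 ≤ dampingRate p D C :=
  div_nonneg (by nlinarith) (sub_pos.2 hp).le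

theorem abs_sq_sub_one_le {κ ε : ℝ} (hκ : |κ - 1| ≤ ε) (hε : ε ≤ 1) : |κ ^ 2 - 1| ≤ 3 * ε := by
  obtain ⟨h₁, h₂⟩ := abs_le.1 hκ
  have hsum : |κ + 1| ≤ 3 := abs_le.2 ⟨by linarith, by linarith⟩
  calc |κ ^ 2 - 1| = |κ + 1| * |κ - 1| := by rw [← abs_mul]; ring_nf
    _ ≤ 3 * ε := by gcongr

theorem sq_add_le_one_sub_mul_rpow {p h D C κ : ℝ} (hp : 1 < p) (hh : 0 ≤ h) (hD : 0 ≤ D)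
    (hC : 0 ≤ C) (hhB : h * dampingRate p D C < 1) (hphB : (p - 1) * (h * dampingRate p D C) ≤ 1)
    (hhD : h * D ≤ 1) (hκ : |κ - 1| ≤ h * D) :
    κ ^ 2 + h * C ≤ (1 - h * dampingRate p D C) * (κ / (1 - h * dampingRate p D C)) ^ p := by
  have hB := dampingRate_nonneg hp hD hC
  have hrate : (p - 1) * (h * dampingRate p D C) = h * (2 * p * D + 3 * D + C) := by
    rw [dampingRate]
    field_simp [(sub_pos.2 hp).ne']
  have hpow := one_add_sub_le_one_sub_mul_rpow hp.le (mul_nonneg hh hB) hhB hphB hκ hhD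
  have hsq := (abs_le.1 (abs_sq_sub_one_le hκ hhD)).2
  rw [hrate] at hpow
  linarith

/-- Here `q = |∇u(y)|` and `g = |∇u(x)|`, and `a`, `b` (respectively `a'`, `b'`) are the time
derivative and the Laplacian of `u` at `y` (respectively at `x`). -/
theorem time_derivative_gap_le {p h D C M κ q g a b a' b' : ℝ} (hp : 1 < p) (hh : 0 ≤ h)
    (hD : 0 ≤ D) (hC : 0 ≤ C) (hhB : h * dampingRate p D C < 1)
    (hphB : (p - 1) * (h * dampingRate p D C) ≤ 1) (hhD : h * D ≤ 1) (hκ : |κ - 1| ≤ h * D)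
    (hq : 0 ≤ q) (hg : (1 - h * dampingRate p D C) * g = κ * q) (haM : |a| ≤ M)
    (hy : a - b = q ^ p) (hx : a' - b' = g ^ p)
    (hspace : κ ^ 2 * b - (1 - h * dampingRate p D C) * b' ≤ h * q * C) :
    a - (1 - h * dampingRate p D C) * a' ≤ h * (3 * D * M + C) := by
  have hsuper := sq_add_le_one_sub_mul_rpow hp hh hD hC hhB hphB hhD hκ
  set θ := 1 - h * dampingRate p D C
  have hθ : 0 < θ := sub_pos.2 hhB
  have hκ₀ : 0 ≤ κ := by linarith [(abs_le.1 hκ).1]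
  have hgp : g ^ p = (κ / θ) ^ p * q ^ p := by
    rw [← Real.mul_rpow (by positivity) hq, ← mul_div_right_comm, ← hg,
      mul_div_cancel_left₀ _ hθ.ne']
  have hpow : (κ ^ 2 + h * C) * q ^ p ≤ θ * g ^ p := by
    rw [hgp, ← mul_assoc]
    gcongr
  have htime : (1 - κ ^ 2) * a ≤ 3 * (h * D) * M := by
    refine (le_abs_self _).trans ?_
    rw [abs_mul, abs_sub_comm]
    gcongr
    exact abs_sq_sub_one_le hκ hhD
  have hq_le : q ≤ 1 + q ^ p := by
    rcases le_total q 1 with hq₁ | hq₁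
    · linarith [Real.rpow_nonneg hq p]
    · linarith [Real.self_le_rpow_of_one_le hq₁ hp.le]
  have hhC := mul_le_mul_of_nonneg_left hq_le (mul_nonneg hh hC)
  calc a - θ * a' = (κ ^ 2 * b - θ * b') + (1 - κ ^ 2) * a + (κ ^ 2 * q ^ p - θ * g ^ p) := by
        rw [← hy, ← hx]
        ring
    _ ≤ h * (3 * D * M + C) := by linarith

end Superlinear

section TimeDerivative

theorem nonneg_of_hasDerivAt_of_forall_le {f : ℝ → ℝ} {d l s : ℝ} (hls : l < s)
    (hf : HasDerivAt f d s) (hmax : ∀ t ∈ Icc l s, f t ≤ f s) : 0 ≤ d := by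
  have hmaxOn : IsLocalMaxOn f (Icc l s) s := IsMaxOn.localize hmax
  have htangent : l - s ∈ posTangentConeAt (Icc l s) s :=
    sub_mem_posTangentConeAt_of_segment_subset
      ((segment_symm ℝ s l).trans_subset (segment_subset_Icc hls.le))
  have h := hmaxOn.hasFDerivWithinAt_nonpos hf.hasFDerivAt.hasFDerivWithinAt htangent
  have : (l - s) * d ≤ 0 := by simpa using h
  nlinarith

end TimeDerivative

section Barrier

variable {E : Type*} [NormedAddCommGroup E]

/-- The exterior sphere condition of radius `r` at `b`: a ball of radius `r` whose closure contains
`b` does not meet `Ω`. -/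
def HasExteriorBall (Ω : Set E) (b : E) (r : ℝ) : Prop :=
  ∃ z, dist z b = r ∧ Disjoint (ball z r) Ω

theorem le_norm_sub_of_disjoint_ball {Ω : Set E} {z : E} {r : ℝ} (hzr : Disjoint (ball z r) Ω)
    {x : E} (hx : x ∈ closure Ω) : r ≤ ‖x - z‖ := by
  rw [← dist_eq_norm]
  exact not_lt.1 fun h => (hzr.closure_right isOpen_ball).le_bot ⟨mem_ball.2 h, hx⟩

/-- A Gaussian centred at `z`. It is strictly subharmonic where `2 α ‖x - z‖² > dim E`, and serves
as a barrier in the exterior of a ball centred at `z`. -/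
def gaussian (α : ℝ) (z x : E) : ℝ := Real.exp (-α * ‖x - z‖ ^ 2)

theorem gaussian_pos (α : ℝ) (z x : E) : 0 < gaussian α z x := Real.exp_pos _

theorem continuous_gaussian (α : ℝ) (z : E) : Continuous (gaussian α z) := by
  unfold gaussian
  fun_prop

theorem exp_le_gaussian {α R : ℝ} (hα : 0 ≤ α) {z x : E} (hR : ‖x - z‖ ≤ R) :
    Real.exp (-α * R ^ 2) ≤ gaussian α z x :=
  Real.exp_le_exp.2 (mul_le_mul_of_nonpos_left (by gcongr) (neg_nonpos.2 hα))

theorem gaussian_le_exp {α r : ℝ} (hα : 0 ≤ α) (hr₀ : 0 ≤ r) {z x : E} (hr : r ≤ ‖x - z‖) :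
    gaussian α z x ≤ Real.exp (-α * r ^ 2) :=
  Real.exp_le_exp.2 (mul_le_mul_of_nonpos_left (by gcongr) (neg_nonpos.2 hα))

theorem exp_sub_gaussian_le {α r : ℝ} (hα : 0 ≤ α) (hr₀ : 0 ≤ r) {z x : E} (hr : r ≤ ‖x - z‖) :
    Real.exp (-α * r ^ 2) - gaussian α z x ≤ α * (‖x - z‖ ^ 2 - r ^ 2) := by
  have hsq : 0 ≤ ‖x - z‖ ^ 2 - r ^ 2 := sub_nonneg.2 (by gcongr)
  have hexp : 1 - Real.exp (-(α * (‖x - z‖ ^ 2 - r ^ 2))) ≤ α * (‖x - z‖ ^ 2 - r ^ 2) := by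
    linarith [Real.add_one_le_exp (-(α * (‖x - z‖ ^ 2 - r ^ 2)))]
  calc Real.exp (-α * r ^ 2) - gaussian α z x =
        Real.exp (-α * r ^ 2) * (1 - Real.exp (-(α * (‖x - z‖ ^ 2 - r ^ 2)))) := by
        rw [gaussian, mul_sub, ← Real.exp_add]
        ring_nf
    _ ≤ 1 * (α * (‖x - z‖ ^ 2 - r ^ 2)) := by
        gcongr
        · linarith [Real.exp_le_one_iff.2 (neg_nonpos.2 (mul_nonneg hα hsq))]
        · exact Real.exp_le_one_iff.2 (mul_nonpos_of_nonpos_of_nonneg (neg_nonpos.2 hα)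
            (sq_nonneg r))
    _ = α * (‖x - z‖ ^ 2 - r ^ 2) := one_mul _

variable [InnerProductSpace ℝ E]

theorem hasHessianAt_gaussian [CompleteSpace E] (α : ℝ) (z x : E) :
    HasHessianAt (gaussian α z) (fun y => (-2 * α * gaussian α z y) • (y - z))
      ((-2 * α * gaussian α z x) • (ContinuousLinearMap.id ℝ E -
        (2 * α) • (innerSL ℝ (x - z)).smulRight (x - z))) x := by
  have hgrad (y : E) : HasFDerivAt (gaussian α z)
      ((-2 * α * gaussian α z y) • innerSL ℝ (y - z)) y := by
    have := (((hasFDerivAt_id y).sub_const z).norm_sq.const_mul (-α)).exp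
    convert! this using 1
    ext v
    simp [gaussian]
    ring
  refine ⟨Eventually.of_forall fun y => ?_, ?_⟩
  · rw [hasGradientAt_iff_hasFDerivAt, map_smul]
    exact hgrad y
  · convert! ((hgrad x).const_mul (-2 * α)).smul ((hasFDerivAt_id x).sub_const z) using 1
    ext v
    simp
    module

variable [FiniteDimensional ℝ E]

theorem trace_hessian_gaussian (α : ℝ) (z x : E) :
    LinearMap.trace ℝ E ((-2 * α * gaussian α z x) • (ContinuousLinearMap.id ℝ E -
        (2 * α) • (innerSL ℝ (x - z)).smulRight (x - z)) : E →L[ℝ] E) =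
      2 * α * gaussian α z x * (2 * (α * ‖x - z‖ ^ 2) - Module.finrank ℝ E) := by
  have hrank (w : E) : LinearMap.trace ℝ E ((innerSL ℝ w).smulRight w : E →L[ℝ] E) = ‖w‖ ^ 2 := by
    rw [← real_inner_self_eq_norm_sq]
    exact LinearMap.trace_smulRight _ _
  generalize gaussian α z x = c, x - z = w
  simp only [ContinuousLinearMap.toLinearMap_smul, ContinuousLinearMap.toLinearMap_sub, map_smul,
    map_sub, ContinuousLinearMap.coe_id, LinearMap.trace_id, hrank, smul_eq_mul]
  ring

theorem le_trace_hessian_gaussian {α r : ℝ} (hα : 0 ≤ α) (hr₀ : 0 ≤ r)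
    (hαr : Module.finrank ℝ E + 1 ≤ α * r ^ 2) {z x : E} (hr : r ≤ ‖x - z‖) :
    2 * α * gaussian α z x ≤
      LinearMap.trace ℝ E ((-2 * α * gaussian α z x) • (ContinuousLinearMap.id ℝ E -
        (2 * α) • (innerSL ℝ (x - z)).smulRight (x - z)) : E →L[ℝ] E) := by
  have hρ : α * r ^ 2 ≤ α * ‖x - z‖ ^ 2 := by gcongr
  rw [trace_hessian_gaussian]
  exact le_mul_of_one_le_right (mul_nonneg (by positivity) (gaussian_pos α z x).le)
    (by linarith [(Nat.cast_nonneg (Module.finrank ℝ E) : (0 : ℝ) ≤ _)])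

theorem sub_le_of_trace_lt {Ω : Set E} (hΩ : IsOpen Ω)
    (hΩb : Bornology.IsBounded Ω) {U V : E → ℝ} {P R : E → E} {A B : E → E →L[ℝ] E}
    (hUc : ContinuousOn U (closure Ω)) (hVc : ContinuousOn V (closure Ω))
    (hU : ∀ x ∈ Ω, HasHessianAt U P (A x) x) (hV : ∀ x ∈ Ω, HasHessianAt V R (B x) x)
    (htrace : ∀ x ∈ Ω, LinearMap.trace ℝ E (A x) < LinearMap.trace ℝ E (B x)) {c : ℝ}
    (hc : ∀ x ∈ frontier Ω, V x - U x ≤ c) : ∀ x ∈ closure Ω, V x - U x ≤ c := by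
  intro x hx
  obtain ⟨y, hy, hmax⟩ := (isCompact_of_isClosed_isBounded isClosed_closure
    hΩb.closure).exists_isMaxOn ⟨x, hx⟩ (hVc.sub hUc)
  refine (hmax hx).trans ?_
  by_cases hyΩ : y ∈ Ω
  · have hmax' : IsLocalMax (fun z => V z - U z) y :=
      hmax.isLocalMax (mem_of_superset (hΩ.mem_nhds hyΩ) subset_closure)
    have := ((hV y hyΩ).sub (hU y hyΩ)).trace_nonpos_of_isLocalMax hmax'
    simp only [ContinuousLinearMap.toLinearMap_sub, map_sub] at this
    linarith [htrace y hyΩ]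
  · exact hc y (hΩ.frontier_eq ▸ ⟨hy, hyΩ⟩)

theorem neg_mul_sq_sub_sq_le {Ω : Set E} (hΩ : IsOpen Ω) {z : E} {r R : ℝ}
    (hr : 0 < r) (hzr : Disjoint (ball z r) Ω) (hR : closure Ω ⊆ closedBall z R) {α : ℝ}
    (hαr : Module.finrank ℝ E + 1 ≤ α * r ^ 2) {U : E → ℝ} {P : E → E} {A : E → E →L[ℝ] E} {M : ℝ}
    (hUc : ContinuousOn U (closure Ω)) (hU₀ : ∀ x ∈ frontier Ω, 0 ≤ U x)
    (hU : ∀ x ∈ Ω, HasHessianAt U P (A x) x) (hM : ∀ x ∈ Ω, LinearMap.trace ℝ E (A x) ≤ M) :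
    ∀ x ∈ closure Ω,
      -((|M| + 1) / 2 * Real.exp (α * R ^ 2) * (‖x - z‖ ^ 2 - r ^ 2)) ≤ U x := by
  have hα : 0 < α := pos_of_mul_pos_left (lt_of_lt_of_le (by positivity) hαr) (sq_nonneg r)
  have hout {x : E} (hx : x ∈ closure Ω) := le_norm_sub_of_disjoint_ball hzr hx
  set a : ℝ := (|M| + 1) / (2 * α) * Real.exp (α * R ^ 2) with ha
  have ha₀ : 0 < a := by positivity
  have hM_lt {x : E} (hx : x ∈ closure Ω) : M < a * (2 * α * gaussian α z x) := by
    calc M < |M| + 1 := (le_abs_self M).trans_lt (lt_add_one _)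
      _ = a * (2 * α * Real.exp (-α * R ^ 2)) := by
          rw [ha, neg_mul, Real.exp_neg]
          field_simp
      _ ≤ a * (2 * α * gaussian α z x) := by
          gcongr
          exact exp_le_gaussian hα.le (mem_closedBall_iff_norm.1 (hR hx))
  have hcomparison := sub_le_of_trace_lt hΩ (isBounded_closedBall.subset (subset_closure.trans hR))
    hUc ((continuous_gaussian α z).const_smul a).continuousOn hU
    (fun x _ => (hasHessianAt_gaussian α z x).const_mul a) (c := a * Real.exp (-α * r ^ 2))
    (fun x hx => ?_) (fun x hx => ?_)
  · intro x hx
    have hexp := mul_le_mul_of_nonneg_left (exp_sub_gaussian_le hα.le hr.le (hout hx)) ha₀.le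
    have haα : a * α = (|M| + 1) / 2 * Real.exp (α * R ^ 2) := by rw [ha]; field_simp
    have := hcomparison x hx
    rw [← haα]
    simp only [Pi.smul_apply, smul_eq_mul] at this
    linarith
  · rw [ContinuousLinearMap.toLinearMap_smul, map_smul, smul_eq_mul]
    refine (hM x hx).trans_lt ((hM_lt (subset_closure hx)).trans_le ?_)
    gcongr
    exact le_trace_hessian_gaussian hα.le hr.le hαr (hout (subset_closure hx))
  · have := mul_le_mul_of_nonneg_left
      (gaussian_le_exp hα.le hr.le (hout (frontier_subset_closure hx))) ha₀.le
    simp only [Pi.smul_apply, smul_eq_mul]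
    linarith [hU₀ x hx]

theorem exists_forall_neg_mul_dist_le_of_trace_le {Ω : Set E} (hΩ : IsOpen Ω)
    (hΩb : Bornology.IsBounded Ω) {r : ℝ} (hr : 0 < r) (M : ℝ) :
    ∃ K, 0 ≤ K ∧ ∀ b ∈ frontier Ω, HasExteriorBall Ω b r → ∀ (U : E → ℝ) (P : E → E)
      (A : E → E →L[ℝ] E), ContinuousOn U (closure Ω) → (∀ x ∈ frontier Ω, 0 ≤ U x) →
      (∀ x ∈ Ω, HasHessianAt U P (A x) x) → (∀ x ∈ Ω, LinearMap.trace ℝ E (A x) ≤ M) →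
      ∀ x ∈ closure Ω, -(K * dist x b) ≤ U x := by
  obtain ⟨d, hd⟩ := isBounded_iff.1 hΩb.closure
  set R := |d| + r
  set α := (Module.finrank ℝ E + 1) / r ^ 2
  have hαr : Module.finrank ℝ E + 1 ≤ α * r ^ 2 := (div_mul_cancel₀ _ (by positivity)).ge
  refine ⟨(|M| + 1) / 2 * Real.exp (α * R ^ 2) * (2 * R), by positivity, ?_⟩
  rintro b hb ⟨z, hzb, hzr⟩ U P A hUc hU₀ hU hM x hx
  have hdist (y : E) : dist y z ≤ dist y b + r := by
    rw [← hzb, dist_comm z b]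
    exact dist_triangle y b z
  have hyb {y : E} (hy : y ∈ closure Ω) : dist y b ≤ |d| :=
    (hd hy (frontier_subset_closure hb)).trans (le_abs_self d)
  have hR : closure Ω ⊆ closedBall z R := fun y hy =>
    mem_closedBall.2 ((hdist y).trans (add_le_add_left (hyb hy) r))
  have hsq : ‖x - z‖ ^ 2 - r ^ 2 ≤ 2 * R * dist x b := by
    have hrx := le_norm_sub_of_disjoint_ball hzr hx
    have hxz := hdist x
    have hxb := hyb hx
    rw [dist_eq_norm] at hxz
    nlinarith [dist_nonneg (x := x) (y := b)]
  refine le_trans ?_ (neg_mul_sq_sub_sq_le hΩ hr hzr hR hαr hUc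
    hU₀ hU hM x hx)
  rw [neg_le_neg_iff, mul_assoc _ (2 * R)]
  gcongr

end Barrier

section ExteriorBall

variable {E : Type*} [NormedAddCommGroup E] [InnerProductSpace ℝ E] [CompleteSpace E]

theorem hasExteriorBall_of_differentiableAt {Ω : Set E} {f : E → ℝ} {b : E} {K : NNReal} {ρ r : ℝ}
    (hr : 0 < r) (hrρ : 2 * r ≤ ρ) (hrK : 2 * r * K ≤ ‖fderiv ℝ f b‖) (hfb : f b = 0)
    (hb : fderiv ℝ f b ≠ 0)
    (hf : ∀ y ∈ ball b ρ, DifferentiableAt ℝ f y ∧ ‖fderiv ℝ f y - fderiv ℝ f b‖ ≤ K * ‖y - b‖)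
    (hΩ : ∀ y ∈ Ω ∩ ball b ρ, f y < 0) : HasExteriorBall Ω b r := by
  set L := fderiv ℝ f b
  set g := (InnerProductSpace.toDual ℝ E).symm L
  have hgL : ‖g‖ = ‖L‖ := LinearIsometryEquiv.norm_map _ _
  have hg : 0 < ‖g‖ := hgL ▸ norm_pos_iff.2 hb
  have : 0 < ρ := by linarith
  have hunit : ‖(r / ‖g‖) • g‖ = r := by
    rw [norm_smul_of_nonneg (by positivity), div_mul_cancel₀ _ hg.ne']
  refine ⟨b + (r / ‖g‖) • g, by simpa [dist_eq_norm] using hunit,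
    Set.disjoint_left.2 fun y hyz hyΩ => ?_⟩
  rw [mem_ball, dist_eq_norm, ← sub_sub] at hyz
  have hyb : ‖y - b‖ < ρ := by
    linarith [norm_le_norm_add_norm_sub' (y - b) ((r / ‖g‖) • g)]
  have hinner : ‖g‖ * ‖y - b‖ ^ 2 < 2 * r * L (y - b) := by
    have hsq := pow_lt_pow_left₀ hyz (norm_nonneg _) two_ne_zero
    rw [norm_sub_sq_real, hunit, inner_smul_right, real_inner_comm,
      InnerProductSpace.toDual_symm_apply, add_lt_iff_neg_right, sub_neg] at hsq
    calc ‖g‖ * ‖y - b‖ ^ 2 < ‖g‖ * (2 * (r / ‖g‖ * L (y - b))) := by gcongr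
      _ = 2 * r * L (y - b) := by field_simp
  have hsub : closedBall b ‖y - b‖ ⊆ ball b ρ := closedBall_subset_ball hyb
  have hyy : y ∈ closedBall b ‖y - b‖ := mem_closedBall_iff_norm.2 le_rfl
  have htaylor := Convex.norm_image_sub_le_of_norm_fderiv_le' (𝕜 := ℝ) (C := K * ‖y - b‖)
    (fun z hz => (hf z (hsub hz)).1) (fun z hz => (hf z (hsub hz)).2.trans ?_)
    (convex_closedBall b ‖y - b‖) (mem_closedBall_self (norm_nonneg _)) hyy
  · have hneg := hΩ y ⟨hyΩ, hsub hyy⟩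
    have hLy : L (y - b) ≤ K * ‖y - b‖ ^ 2 := by
      rw [hfb, sub_zero, Real.norm_eq_abs] at htaylor
      linarith [neg_le_of_abs_le htaylor]
    nlinarith [sq_nonneg ‖y - b‖]
  · have := mem_closedBall_iff_norm.1 hz
    gcongr

theorem eventually_hasExteriorBall_of_contDiffAt {Ω U : Set E} {f : E → ℝ} {b₀ : E}
    (hf : ContDiffAt ℝ 2 f b₀) (hf' : fderiv ℝ f b₀ ≠ 0) (hU : U ∈ nhds b₀)
    (hΩ : ∀ y ∈ U ∩ Ω, f y < 0) (hF : ∀ y ∈ U ∩ frontier Ω, f y = 0) :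
    ∀ᶠ q in nhds b₀ ×ˢ nhdsWithin (0 : ℝ) (Ioi 0),
      q.1 ∈ frontier Ω → HasExteriorBall Ω q.1 q.2 := by
  have hf₁ : ContDiffAt ℝ 1 (fderiv ℝ f) b₀ := hf.fderiv_right (by norm_num)
  obtain ⟨K, V, hV, hK⟩ := hf₁.exists_lipschitzOnWith
  have hdiff : ∀ᶠ y in nhds b₀, DifferentiableAt ℝ f y :=
    (hf.eventually (by simp)).mono fun y hy => hy.differentiableAt two_ne_zero
  obtain ⟨ρ, hρ, hball⟩ := eventually_nhds_iff_ball.1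
    (hdiff.and ((eventually_mem_set.2 hV).and (eventually_mem_set.2 hU)))
  have hstep : Tendsto (fun q : E × ℝ => q.2) (nhds b₀ ×ˢ nhdsWithin 0 (Ioi 0)) (nhds 0) :=
    tendsto_snd.mono_right nhdsWithin_le_nhds
  have hslope : ∀ᶠ q in nhds b₀ ×ˢ nhdsWithin (0 : ℝ) (Ioi 0),
      2 * q.2 * K < ‖fderiv ℝ f q.1‖ :=
    ((hstep.const_mul 2).mul_const (K : ℝ)).eventually_lt
      (hf₁.continuousAt.norm.tendsto.comp tendsto_fst) (by simpa using hf')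
  filter_upwards [hslope, hstep.eventually_lt_const (by positivity : 0 < ρ / 4),
    tendsto_snd.eventually (self_mem_nhdsWithin (s := Ioi (0 : ℝ))),
    tendsto_fst.eventually (ball_mem_nhds b₀ (by positivity : 0 < ρ / 2))]
    with ⟨b, r⟩ hrK hrρ hr hb hbF
  have hsub : ball b (ρ / 2) ⊆ ball b₀ ρ :=
    ball_subset_ball' (by linarith [mem_ball.1 hb])
  have hbρ := hball b (hsub (mem_ball_self (by positivity)))
  refine hasExteriorBall_of_differentiableAt (K := K) (ρ := ρ / 2) hr (by linarith) hrK.le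
    (hF b ⟨hbρ.2.2, hbF⟩) (norm_pos_iff.1 (lt_of_le_of_lt (by positivity) hrK))
    (fun y hy => ⟨(hball y (hsub hy)).1, ?_⟩) fun y hy => hΩ y ⟨(hball y (hsub hy.2)).2.2, hy.1⟩
  exact hK.norm_sub_le (hball y (hsub hy)).2.1 hbρ.2.1

theorem eventually_forall_hasExteriorBall {n : ℕ} {Ω : Set (EuclideanSpace ℝ (Fin n))}
    (hΩb : Bornology.IsBounded Ω) (hΩ : IsC2Boundary Ω) :
    ∀ᶠ r in nhdsWithin (0 : ℝ) (Ioi 0), ∀ b ∈ frontier Ω, HasExteriorBall Ω b r := by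
  have hcompact : IsCompact (frontier Ω) :=
    isCompact_of_isClosed_isBounded isClosed_frontier (hΩb.closure.subset frontier_subset_closure)
  have hlocal := hcompact.mem_nhdsSet_prod_of_forall (l := nhdsWithin (0 : ℝ) (Ioi 0))
    (s := {q | q.1 ∈ frontier Ω → HasExteriorBall Ω q.1 q.2}) fun b₀ hb₀ => by
      obtain ⟨f, U, hU, hf, hf', hneg, hzero⟩ := hΩ b₀ hb₀
      exact eventually_hasExteriorBall_of_contDiffAt (hf.contDiffAt hU)
        (hf' b₀ (mem_of_mem_nhds hU)) hU (fun y hy => (hneg.subset hy).2)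
        fun y hy => (hzero.subset hy).2
  have hprincipal := Filter.prod_mono_left (nhdsWithin (0 : ℝ) (Ioi 0))
    (principal_le_nhdsSet (s := frontier Ω)) hlocal
  rw [prod_comm, mem_map, mem_prod_principal] at hprincipal
  exact mem_of_superset hprincipal fun r hr b hb => hr b hb hb

end ExteriorBall

section TwoSidedBalls

theorem ball_subset_of_le_infDist_frontier {E : Type*} [NormedAddCommGroup E]
    [NormedSpace ℝ E] {Ω : Set E} (hΩ : IsOpen Ω) {z : E} {s : ℝ} (hz : z ∈ Ω)
    (hs : s ≤ infDist z (frontier Ω)) : ball z s ⊆ Ω := by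
  rcases le_or_gt s 0 with hs₀ | hs₀
  · simp [ball_eq_empty.2 hs₀]
  refine (convex_ball z s).isPreconnected.subset_of_closure_inter_subset hΩ
    ⟨z, mem_ball_self hs₀, hz⟩ fun y ⟨hyc, hy⟩ => by_contra fun hyΩ => ?_
  have := infDist_le_dist_of_mem (x := z) (hΩ.frontier_eq ▸ ⟨hyc, hyΩ⟩ : y ∈ frontier Ω)
  rw [mem_ball'] at hy
  linarith

variable {E : Type*} [NormedAddCommGroup E] [InnerProductSpace ℝ E]

theorem eq_sub_smul_of_disjoint_ball {y b e : E} {d r : ℝ} (hd : 0 < d) (hr : 0 < r)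
    (he : ‖e‖ = 1) (hy : dist y b = d) (h : Disjoint (ball y d) (ball (b + r • e) r)) :
    y = b - d • e := by
  rw [disjoint_ball_ball_iff hd hr, dist_eq_norm, ← sub_sub] at h
  rw [dist_eq_norm] at hy
  have hre : ‖-(r • e)‖ = r := by rw [norm_neg, norm_smul_of_nonneg hr.le, he, mul_one]
  have hray : SameRay ℝ (y - b) (-(r • e)) := sameRay_iff_norm_add.2
    ((norm_add_le _ _).antisymm (by rwa [hy, hre, ← sub_eq_add_neg]))
  have hsmul := hray.norm_smul_eq
  rw [hy, hre, smul_neg, smul_comm d r e, ← smul_neg] at hsmul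
  have hyb : y - b = -(d • e) := (smul_right_injective E hr.ne' hsmul).symm
  rw [← sub_add_cancel y b, hyb, neg_add_eq_sub]

/-- The exterior and interior sphere conditions with a common radius `r`, where `ν b` is the inward
unit normal at the boundary point `b`. -/
structure HasTwoSidedBalls (Ω : Set E) (ν : E → E) (r : ℝ) : Prop where
  pos : 0 < r
  norm_eq_one : ∀ b ∈ frontier Ω, ‖ν b‖ = 1
  ball_subset : ∀ b ∈ frontier Ω, ball (b + r • ν b) r ⊆ Ω
  disjoint_ball : ∀ b ∈ frontier Ω, Disjoint (ball (b - r • ν b) r) Ω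

namespace HasTwoSidedBalls

variable {Ω : Set E} {ν : E → E} {r : ℝ}

theorem of_hasExteriorBall (hr : 0 < r) (hν : ∀ b ∈ frontier Ω, ‖ν b‖ = 1)
    (hball : ∀ b ∈ frontier Ω, ball (b + r • ν b) r ⊆ Ω)
    (hext : ∀ b ∈ frontier Ω, HasExteriorBall Ω b r) : HasTwoSidedBalls Ω ν r where
  pos := hr
  norm_eq_one := hν
  ball_subset := hball
  disjoint_ball b hb := by
    obtain ⟨z, hz, hdisj⟩ := hext b hb
    rwa [← eq_sub_smul_of_disjoint_ball hr hr (hν b hb) hz (hdisj.mono_right (hball b hb))]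

theorem hasExteriorBall (hΩ : HasTwoSidedBalls Ω ν r) {b : E} (hb : b ∈ frontier Ω) :
    HasExteriorBall Ω b r :=
  ⟨b - r • ν b, by simp [norm_smul, hΩ.norm_eq_one b hb, abs_of_pos hΩ.pos], hΩ.disjoint_ball b hb⟩

theorem eq_add_smul_of_dist_eq_infDist (hΩ : HasTwoSidedBalls Ω ν r) (hΩo : IsOpen Ω) {x b : E}
    (hx : x ∈ closure Ω) (hb : b ∈ frontier Ω) (hxb : dist x b = infDist x (frontier Ω)) :
    x = b + dist x b • ν b := by
  rcases eq_or_ne x b with rfl | hne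
  · simp
  have hxΩ : x ∈ Ω := by
    by_contra h
    have hxF : x ∈ frontier Ω := hΩo.frontier_eq ▸ ⟨hx, h⟩
    exact hne (dist_eq_zero.1 (hxb.trans (infDist_zero_of_mem hxF)))
  have hdisj := (hΩ.disjoint_ball b hb).symm.mono_left
    (ball_subset_of_le_infDist_frontier hΩo hxΩ hxb.le)
  rw [sub_eq_add_neg, ← smul_neg] at hdisj
  simpa using eq_sub_smul_of_disjoint_ball (dist_pos.2 hne) hΩ.pos
    (by rw [norm_neg, hΩ.norm_eq_one b hb]) rfl hdisj

theorem mul_norm_sub_le (hΩ : HasTwoSidedBalls Ω ν r) {b c : E} (hb : b ∈ frontier Ω)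
    (hc : c ∈ frontier Ω) : r * ‖ν b - ν c‖ ≤ ‖b - c‖ := by
  have hfar {b c : E} (hb : b ∈ frontier Ω) (hc : c ∈ frontier Ω) :
      2 * r ≤ ‖(b - c) + r • (ν b + ν c)‖ := by
    have h := (hΩ.disjoint_ball c hc).symm.mono_left (hΩ.ball_subset b hb)
    rw [disjoint_ball_ball_iff hΩ.pos hΩ.pos, dist_eq_norm] at h
    convert! h using 1
    · ring
    · congr 1
      module
  have hbc := hfar hb hc
  have hcb : 2 * r ≤ ‖(b - c) - r • (ν b + ν c)‖ := by
    rw [norm_sub_rev]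
    convert! hfar hc hb using 2
    module
  have hpar := parallelogram_law_with_norm ℝ (b - c) (r • (ν b + ν c))
  have hparν := parallelogram_law_with_norm ℝ (ν b) (ν c)
  rw [hΩ.norm_eq_one b hb, hΩ.norm_eq_one c hc] at hparν
  rw [norm_smul_of_nonneg hΩ.pos.le] at hpar
  have hr := hΩ.pos
  have hbc₂ := pow_le_pow_left₀ (by positivity) hbc 2
  have hcb₂ := pow_le_pow_left₀ (by positivity) hcb 2
  refine le_of_sq_le_sq ?_ (norm_nonneg _)
  have hsq : (r * ‖ν b - ν c‖) ^ 2 = 4 * r ^ 2 - (r * ‖ν b + ν c‖) ^ 2 := by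
    linear_combination r ^ 2 * hparν
  linarith

theorem add_smul_add_smul_mem (hΩ : HasTwoSidedBalls Ω ν r) {b η : E} (hb : b ∈ frontier Ω)
    (hη : ‖η‖ ≤ 2) (hην : 1 / 4 ≤ ⟪η, ν b⟫) {d s : ℝ} (hd : 0 ≤ d) (hs : 0 < s)
    (hdr : 8 * s + d < r) : b + d • ν b + s • η ∈ Ω := by
  have hr := hΩ.pos
  refine hΩ.ball_subset b hb (mem_ball_iff_norm.2 (lt_of_pow_lt_pow_left₀ 2 hr.le ?_))
  have hk : 0 < r - d := by linarith
  have hη₂ : ‖η‖ ^ 2 ≤ 2 ^ 2 := by gcongr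
  calc ‖b + d • ν b + s • η - (b + r • ν b)‖ ^ 2 = ‖s • η - (r - d) • ν b‖ ^ 2 := by
        congr 2
        module
    _ = s * (s * ‖η‖ ^ 2 - 2 * ((r - d) * ⟪η, ν b⟫)) + (r - d) ^ 2 := by
        rw [norm_sub_sq_real, norm_smul_of_nonneg hs.le, norm_smul_of_nonneg hk.le,
          hΩ.norm_eq_one b hb, real_inner_smul_left, inner_smul_right]
        ring
    _ ≤ s * (s * 2 ^ 2 - 2 * ((r - d) * (1 / 4))) + (r - d) ^ 2 := by gcongr
    _ < r ^ 2 := by nlinarith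

end HasTwoSidedBalls

theorem IsC2Boundary.exists_hasTwoSidedBalls {n : ℕ} {Ω : Set (EuclideanSpace ℝ (Fin n))}
    (hΩ : IsC2Boundary Ω) (hΩo : IsOpen Ω) (hΩb : Bornology.IsBounded Ω)
    {ν : EuclideanSpace ℝ (Fin n) → EuclideanSpace ℝ (Fin n)} {δ₀ : ℝ} (hδ₀ : 0 < δ₀)
    (hν : ∀ b ∈ frontier Ω, ‖ν b‖ = 1 ∧
      ∀ s ∈ Ioo 0 δ₀, b + s • ν b ∈ Ω ∧ infDist (b + s • ν b) (frontier Ω) = s) :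
    ∃ r, HasTwoSidedBalls Ω ν r := by
  obtain ⟨r, hext, hr⟩ :=
    ((eventually_forall_hasExteriorBall hΩb hΩ).and (Ioo_mem_nhdsGT hδ₀)).exists
  refine ⟨r, .of_hasExteriorBall hr.1 (fun b hb => (hν b hb).1) (fun b hb => ?_) hext⟩
  obtain ⟨hmem, hdist⟩ := (hν b hb).2 r hr
  exact ball_subset_of_le_infDist_frontier hΩo hmem hdist.ge

end TwoSidedBalls

section TransversalField

variable {E : Type*} [NormedAddCommGroup E] [InnerProductSpace ℝ E]

open scoped Manifold in
theorem exists_contDiff_hasCompactSupport_norm_sub_le [FiniteDimensional ℝ E] (n : ℕ∞) {F : Set E}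
    {ν : E → E} {ε : ℝ} (hF : IsCompact F) (hν : ContinuousOn ν F) (hν₁ : ∀ b ∈ F, ‖ν b‖ ≤ 1)
    (hε : 0 < ε) : ∃ X : E → E, ContDiff ℝ n X ∧ HasCompactSupport X ∧ (∀ x, ‖X x‖ ≤ 1) ∧
      ∀ b ∈ F, ‖X b - ν b‖ ≤ ε := by
  obtain ⟨K, hK, hFK⟩ := exists_compact_superset hF
  let t : E → Set E := fun x =>
    closedBall 0 1 ∩ ({y | x ∉ K → y = 0} ∩ {y | x ∈ F → ‖y - ν x‖ ≤ ε})
  have hconvex (x : E) : Convex ℝ (t x) := by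
    refine (convex_closedBall 0 1).inter (.inter ?_ ?_)
    · by_cases hx : x ∈ K
      · simpa only [hx, not_true_eq_false, false_imp_iff, ofPred_true] using convex_univ
      · simpa only [hx, not_false_eq_true, true_imp_iff, ofPred_eq_eq_singleton]
          using convex_singleton 0
    · by_cases hx : x ∈ F
      · simpa only [hx, true_imp_iff, closedBall, dist_eq_norm] using convex_closedBall (ν x) ε
      · simpa only [hx, false_imp_iff, ofPred_true] using convex_univ
  have hlocal (x : E) : ∃ c : E, ∀ᶠ y in nhds x, c ∈ t y := by
    by_cases hx : x ∈ F
    · have hνx : ∀ᶠ y in nhds x, y ∈ F → dist (ν y) (ν x) < ε :=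
        eventually_nhdsWithin_iff.1 (tendsto_nhds.1 (hν x hx) ε hε)
      refine ⟨ν x, ?_⟩
      filter_upwards [hνx, mem_interior_iff_mem_nhds.1 (hFK hx)] with y hy hyK
      refine ⟨mem_closedBall_zero_iff.2 (hν₁ x hx), fun h => absurd hyK h, fun hyF => ?_⟩
      rw [norm_sub_rev, ← dist_eq_norm]
      exact (hy hyF).le
    · refine ⟨0, ?_⟩
      filter_upwards [hF.isClosed.isOpen_compl.mem_nhds hx] with y hy
      exact ⟨mem_closedBall_self zero_le_one, fun _ => rfl, fun h => absurd h hy⟩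
  obtain ⟨X, hX⟩ := exists_contMDiffMap_forall_mem_convex_of_local_const (n := n) 𝓘(ℝ, E)
    hconvex hlocal
  exact ⟨X, X.contMDiff.contDiff, .intro hK fun x hx => (hX x).2.1 hx,
    fun x => mem_closedBall_zero_iff.1 (hX x).1, fun b hb => (hX b).2.2 hb⟩

/-- A bounded `C²` vector field `X` on the whole space that approximates the inward normal `ν` of
`Ω` on `∂Ω`. The normal itself is only Lipschitz on `∂Ω`, and the two-point maximum principle needs
two derivatives of the direction field. -/
structure IsTransversalField (Ω : Set E) (ν X : E → E) (D : ℝ) : Prop where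
  contDiff : ContDiff ℝ 2 X
  norm_le_one : ∀ x, ‖X x‖ ≤ 1
  norm_fderiv_le : ∀ x, ‖fderiv ℝ X x‖ ≤ D
  norm_fderiv_fderiv_le : ∀ x, ‖fderiv ℝ (fderiv ℝ X) x‖ ≤ D
  norm_sub_normal_le : ∀ b ∈ frontier Ω, ‖X b - ν b‖ ≤ 1 / 8

variable {Ω : Set E} {ν : E → E} {r : ℝ}

theorem HasTwoSidedBalls.continuousOn_normal (hΩ : HasTwoSidedBalls Ω ν r) :
    ContinuousOn ν (frontier Ω) := by
  refine (LipschitzOnWith.of_dist_le_mul (K := r⁻¹.toNNReal) fun b hb c hc => ?_).continuousOn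
  rw [Real.coe_toNNReal _ (inv_nonneg.2 hΩ.pos.le), le_inv_mul_iff₀ hΩ.pos, dist_eq_norm,
    dist_eq_norm]
  exact hΩ.mul_norm_sub_le hb hc

theorem HasTwoSidedBalls.exists_isTransversalField [FiniteDimensional ℝ E]
    (hΩ : HasTwoSidedBalls Ω ν r) (hΩb : Bornology.IsBounded Ω) :
    ∃ X D, IsTransversalField Ω ν X D := by
  have hcompact : IsCompact (frontier Ω) :=
    hΩb.isCompact_closure.of_isClosed_subset isClosed_frontier frontier_subset_closure
  obtain ⟨X, hX, hsupp, hX₁, hXν⟩ := exists_contDiff_hasCompactSupport_norm_sub_le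
    2 (ε := 1 / 8) hcompact hΩ.continuousOn_normal (fun b hb => (hΩ.norm_eq_one b hb).le)
    (by norm_num)
  have hX' : ContDiff ℝ 1 (fderiv ℝ X) := hX.fderiv_right (by norm_num)
  obtain ⟨D₁, hD₁⟩ := hX'.continuous.bounded_above_of_compact_support (hsupp.fderiv (𝕜 := ℝ))
  obtain ⟨D₂, hD₂⟩ := (hX'.continuous_fderiv one_ne_zero).bounded_above_of_compact_support
    ((hsupp.fderiv (𝕜 := ℝ)).fderiv (𝕜 := ℝ))
  exact ⟨X, max D₁ D₂, hX, hX₁, fun x => (hD₁ x).trans (le_max_left _ _),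
    fun x => (hD₂ x).trans (le_max_right _ _), hXν⟩

namespace IsTransversalField

variable {X : E → E} {D h : ℝ} {x e : E}

theorem nonneg (hX : IsTransversalField Ω ν X D) : 0 ≤ D :=
  (norm_nonneg _).trans (hX.norm_fderiv_le 0)

theorem norm_sub_le (hX : IsTransversalField Ω ν X D) (x y : E) : ‖X x - X y‖ ≤ D * ‖x - y‖ :=
  convex_univ.norm_image_sub_le_of_norm_fderiv_le (𝕜 := ℝ)
    (fun z _ => hX.contDiff.differentiable two_ne_zero z) (fun z _ => hX.norm_fderiv_le z)
    (mem_univ y) (mem_univ x)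

theorem norm_add_half_smul_le (hX : IsTransversalField Ω ν X D) (he : ‖e‖ = 1) :
    ‖X x + (1 / 2 : ℝ) • e‖ ≤ 3 / 2 :=
  calc ‖X x + (1 / 2 : ℝ) • e‖ ≤ ‖X x‖ + ‖(1 / 2 : ℝ) • e‖ := norm_add_le _ _
    _ ≤ 1 + 1 / 2 := by
        rw [norm_smul, he]
        gcongr
        · exact hX.norm_le_one x
        · norm_num
    _ = 3 / 2 := by norm_num

theorem le_inner_add_half_smul (hX : IsTransversalField Ω ν X D) {b : E} (hb : b ∈ frontier Ω)
    (hν : ‖ν b‖ = 1) (he : ‖e‖ = 1) (hxb : D * ‖x - b‖ ≤ 1 / 8) :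
    1 / 4 ≤ ⟪X x + (1 / 2 : ℝ) • e, ν b⟫ := by
  have hsplit : X x + (1 / 2 : ℝ) • e = ν b + ((X x - X b) + (X b - ν b)) + (1 / 2 : ℝ) • e := by
    abel
  have hclose : ‖(X x - X b) + (X b - ν b)‖ ≤ 1 / 4 := by
    linarith [norm_add_le (X x - X b) (X b - ν b), hX.norm_sub_le x b, hX.norm_sub_normal_le b hb]
  have hclose' := neg_le_of_abs_le (abs_real_inner_le_norm ((X x - X b) + (X b - ν b)) (ν b))
  have he' := neg_le_of_abs_le (abs_real_inner_le_norm e (ν b))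
  rw [hν, mul_one] at hclose' he'
  rw [hsplit, inner_add_left, inner_add_left (ν b), real_inner_self_eq_norm_sq, hν,
    real_inner_smul_left]
  linarith

theorem shift_mem [FiniteDimensional ℝ E] (hX : IsTransversalField Ω ν X D)
    (hΩ : HasTwoSidedBalls Ω ν r) (hΩo : IsOpen Ω) (hne : (frontier Ω).Nonempty)
    (hhD : 32 * (h * D) ≤ 1) (hhr : 10 * h < r) (he : ‖e‖ = 1)
    (hy : shift X h x e ∈ closure Ω) {s : ℝ} (hs : s ∈ Ico 0 h) : shift X s x e ∈ Ω := by
  set η := X x + (1 / 2 : ℝ) • e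
  set y := shift X h x e
  have hη : ‖η‖ ≤ 3 / 2 := hX.norm_add_half_smul_le he
  have hxs : shift X s x e = y + (h - s) • η := by
    simp only [y, shift]
    module
  have hsh : 0 < h - s := sub_pos.2 hs.2
  obtain ⟨b, hb, hyb⟩ := isClosed_frontier.exists_infDist_eq_dist hne y
  rw [hxs]
  rcases le_or_gt (2 * h) (dist y b) with hfar | hnear
  · have hyΩ : y ∈ Ω := by
      by_contra hyΩ
      have := infDist_zero_of_mem (hΩo.frontier_eq ▸ ⟨hy, hyΩ⟩ : y ∈ frontier Ω)
      linarith [hs.1]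
    refine ball_subset_of_le_infDist_frontier hΩo hyΩ (hfar.trans hyb.ge) ?_
    rw [mem_ball, dist_self_add_left, norm_smul_of_nonneg hsh.le]
    nlinarith [hs.1]
  · have hxb : ‖x - b‖ ≤ 4 * h := by
      have hxy : x - b = (y - b) + h • η := by
        simp only [y, shift, η]
        module
      rw [dist_eq_norm] at hnear
      rw [hxy]
      have := norm_add_le (y - b) (h • η)
      rw [norm_smul_of_nonneg (hs.1.trans hs.2.le)] at this
      nlinarith [hs.1]
    have hηb : 1 / 4 ≤ ⟪η, ν b⟫ := by
      refine hX.le_inner_add_half_smul hb (hΩ.norm_eq_one b hb) he ?_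
      nlinarith [mul_le_mul_of_nonneg_left hxb hX.nonneg]
    rw [hΩ.eq_add_smul_of_dist_eq_infDist hΩo hy hb hyb.symm]
    exact hΩ.add_smul_add_smul_mem hb (by linarith) hηb dist_nonneg hsh (by linarith [hs.1])

end IsTransversalField

theorem exists_norm_smul_sub_eq_half {X ν : E} (hν : ‖ν‖ = 1) (h : ‖X - ν‖ ≤ 1 / 4) :
    ∃ c ∈ Icc (1 / 4 : ℝ) 1, ‖c • ν - X‖ = 1 / 2 := by
  have hcont : ContinuousOn (fun c : ℝ => ‖c • ν - X‖) (Icc (1 / 4) 1) := by fun_prop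
  refine intermediate_value_Icc' (by norm_num) hcont ⟨?_, ?_⟩
  · rw [one_smul, norm_sub_rev]
    linarith
  · have hsplit : (1 / 4 : ℝ) • ν - X = -((3 / 4 : ℝ) • ν + (X - ν)) := by module
    have hle := norm_sub_le_norm_add ((3 / 4 : ℝ) • ν) (X - ν)
    rw [norm_smul, hν] at hle
    rw [hsplit, norm_neg]
    norm_num at hle ⊢
    linarith

end TransversalField

section DirichletSolution

variable {E : Type*} [NormedAddCommGroup E] [InnerProductSpace ℝ E] [FiniteDimensional ℝ E]

/-- A classical solution `u` of `∂ₜu - Δu = |∇u| ^ p` in `Ω × (0, T]` with zero boundary values,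
whose gradient may blow up at the boundary at time `T` only. Here `G`, `H` and `u'` are the spatial
gradient, the spatial Hessian and the time derivative of `u`. -/
structure IsDirichletSolution (Ω : Set E) (T p : ℝ) (u : E → ℝ → ℝ) (G : E → ℝ → E)
    (H : E → ℝ → E →L[ℝ] E) (u' : E → ℝ → ℝ) : Prop where
  continuousOn : ContinuousOn (fun q : E × ℝ => u q.1 q.2) (closure Ω ×ˢ Icc 0 T)
  eq_zero : ∀ b ∈ frontier Ω, ∀ t ∈ Icc 0 T, u b t = 0
  continuousOn_gradient : ContinuousOn (fun q : E × ℝ => G q.1 q.2) (closure Ω ×ˢ Ico 0 T)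
  continuousOn_gradient_interior : ContinuousOn (fun q : E × ℝ => G q.1 q.2) (Ω ×ˢ Ioc 0 T)
  hasHessianAt : ∀ t ∈ Ioc 0 T, ∀ x ∈ Ω, HasHessianAt (fun y => u y t) (fun y => G y t) (H x t) x
  hasDerivAt : ∀ t ∈ Ioc 0 T, ∀ x ∈ Ω, HasDerivAt (u x) (u' x t) t
  equation : ∀ t ∈ Ioc 0 T, ∀ x ∈ Ω, u' x t - LinearMap.trace ℝ E (H x t) = ‖G x t‖ ^ p

theorem IsDirichletSolution.of_euclideanSpace {n : ℕ} {Ω : Set (EuclideanSpace ℝ (Fin n))}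
    (hΩo : IsOpen Ω) {T p : ℝ} {u u' : EuclideanSpace ℝ (Fin n) → ℝ → ℝ}
    {G : EuclideanSpace ℝ (Fin n) → ℝ → EuclideanSpace ℝ (Fin n)}
    {H : EuclideanSpace ℝ (Fin n) → ℝ → (EuclideanSpace ℝ (Fin n) →L[ℝ] EuclideanSpace ℝ (Fin n))}
    (hu : ContinuousOn (fun q : EuclideanSpace ℝ (Fin n) × ℝ => u q.1 q.2) (closure Ω ×ˢ Icc 0 T))
    (hu₀ : ∀ b ∈ frontier Ω, ∀ t ∈ Icc 0 T, u b t = 0)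
    (hGcl : ContinuousOn (fun q : EuclideanSpace ℝ (Fin n) × ℝ => G q.1 q.2) (closure Ω ×ˢ Ico 0 T))
    (hGint : ContinuousOn (fun q : EuclideanSpace ℝ (Fin n) × ℝ => G q.1 q.2) (Ω ×ˢ Ioc 0 T))
    (hG : ∀ t ∈ Ioc 0 T, ∀ x ∈ Ω, HasGradientAt (fun y => u y t) (G x t) x)
    (hH : ∀ t ∈ Ioc 0 T, ∀ x ∈ Ω, HasFDerivAt (fun y => G y t) (H x t) x)
    (hu' : ∀ t ∈ Ioc 0 T, ∀ x ∈ Ω, HasDerivAt (fun s => u x s) (u' x t) t)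
    (hpde : ∀ t ∈ Ioc 0 T, ∀ x ∈ Ω, u' x t - ∑ i : Fin n,
      ⟪H x t (EuclideanSpace.single i 1), EuclideanSpace.single i 1⟫ = ‖G x t‖ ^ p) :
    IsDirichletSolution Ω T p u G H u' where
  continuousOn := hu
  eq_zero := hu₀
  continuousOn_gradient := hGcl
  continuousOn_gradient_interior := hGint
  hasHessianAt t ht x hx := ⟨(hΩo.eventually_mem hx).mono fun z hz => hG t ht z hz, hH t ht x hx⟩
  hasDerivAt := hu'
  equation t ht x hx := by
    simpa [LinearMap.trace_eq_sum_inner _ (EuclideanSpace.basisFun (Fin n) ℝ),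
      real_inner_comm] using hpde t ht x hx

/-- The smallness of the step `h` required by the comparison of `x` with `shift X h x e`, where `D`
bounds the derivatives of `X` and `r` is the radius of the two-sided balls. -/
structure IsSmallStep (p D C r h : ℝ) : Prop where
  pos : 0 < h
  mul_bound_le : 32 * (h * D) ≤ 1
  lt_radius : 10 * h < r
  mul_dampingRate_lt_one : h * dampingRate p D C < 1
  sub_one_mul_dampingRate_le_one : (p - 1) * (h * dampingRate p D C) ≤ 1

theorem eventually_isSmallStep (p D C : ℝ) {r : ℝ} (hr : 0 < r) :
    ∀ᶠ h in nhdsWithin 0 (Ioi 0), IsSmallStep p D C r h := by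
  have hlt (a : ℝ) {c : ℝ} (hc : 0 < c) : ∀ᶠ h in nhdsWithin (0 : ℝ) (Ioi 0), h * a < c := by
    have : Tendsto (fun h : ℝ => h * a) (nhdsWithin 0 (Ioi 0)) (nhds (0 * a)) :=
      (tendsto_id.mul_const a).mono_left nhdsWithin_le_nhds
    exact this.eventually_lt_const (by simpa using hc)
  filter_upwards [self_mem_nhdsWithin, hlt (32 * D) one_pos, hlt 10 hr,
    hlt (dampingRate p D C) one_pos, hlt ((p - 1) * dampingRate p D C) one_pos]
    with h hh h₁ h₂ h₃ h₄
  exact ⟨hh, by linarith, by linarith, h₃, by linarith⟩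

namespace IsDirichletSolution

variable {Ω : Set E} {T p : ℝ} {u : E → ℝ → ℝ} {G : E → ℝ → E} {H : E → ℝ → E →L[ℝ] E}
  {u' : E → ℝ → ℝ} {ν X : E → E} {D h r M s t t₀ : ℝ} {x e : E}

theorem time_derivative_le_of_isLocalMaxOn (hu : IsDirichletSolution Ω T p u G H u')
    (hp : 1 < p) (hX : IsTransversalField Ω ν X D)
    (hh : IsSmallStep p D (twoPointConst E D) r h) (hs : s ∈ Ioc 0 T) (he : ‖e‖ = 1) (hx : x ∈ Ω)
    (hy : shift X h x e ∈ Ω) (hM : |u' (shift X h x e) s| ≤ M)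
    (hmax : IsLocalMaxOn (fun q : E × E => u (shift X h q.1 q.2) s -
      (1 - h * dampingRate p D (twoPointConst E D)) * u q.1 s) (univ ×ˢ sphere 0 1) (x, e)) :
    u' (shift X h x e) s - (1 - h * dampingRate p D (twoPointConst E D)) * u' x s ≤
      h * (3 * D * M + twoPointConst E D) := by
  have hD := hX.nonneg
  have hhD := hh.mul_bound_le
  have := mul_nonneg hh.pos.le hD
  obtain ⟨κ, hκ, hgrad, htrace⟩ := two_point_maximum_principle hX.contDiff (hX.norm_fderiv_le x)
    (hX.norm_fderiv_fderiv_le x) hh.pos (by linarith) he (hu.hasHessianAt s hs _ hy)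
    ((hu.hasHessianAt s hs x hx).const_mul _) hmax
  rw [norm_smul_of_nonneg (sub_pos.2 hh.mul_dampingRate_lt_one).le] at hgrad
  rw [ContinuousLinearMap.toLinearMap_smul, map_smul, smul_eq_mul] at htrace
  exact time_derivative_gap_le hp hh.pos.le hD (twoPointConst_nonneg hD) hh.mul_dampingRate_lt_one
    hh.sub_one_mul_dampingRate_le_one (by linarith) hκ (norm_nonneg _) hgrad hM
    (hu.equation s hs _ hy) (hu.equation s hs x hx) htrace

end IsDirichletSolution

end DirichletSolution

section DifferenceQuotient

variable {E : Type*} [NormedAddCommGroup E] [InnerProductSpace ℝ E]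

/-- The points `((x, e), t)` with `t ∈ [l, m]` at which both `x` and the point `shift X h x e` that
it is compared with lie in `closure Ω`. -/
def comparisonSet (Ω : Set E) (X : E → E) (h l m : ℝ) : Set ((E × E) × ℝ) :=
  (closure Ω ×ˢ sphere 0 1 ∩ {q | shift X h q.1 q.2 ∈ closure Ω}) ×ˢ Icc l m

/-- The increment of `u` from `x` to `shift X h x e` at time `t`, as a function of `((x, e), t)`.
The value `u x` is damped by the factor `a`, and the increment is penalized at the rate `c` from
time `l` on. -/
def twoPointGap (u : E → ℝ → ℝ) (X : E → E) (h a c l : ℝ) (q : (E × E) × ℝ) : ℝ :=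
  u (shift X h q.1.1 q.1.2) q.2 - a * u q.1.1 q.2 - c * (q.2 - l)

theorem continuous_shift {X : E → E} (hX : Continuous X) (h : ℝ) :
    Continuous fun q : E × E => shift X h q.1 q.2 := by
  unfold shift
  fun_prop

theorem isCompact_comparisonSet [FiniteDimensional ℝ E] {Ω : Set E} (hΩb : Bornology.IsBounded Ω)
    {X : E → E} (hX : Continuous X) (h l m : ℝ) : IsCompact (comparisonSet Ω X h l m) :=
  ((hΩb.isCompact_closure.prod (isCompact_sphere 0 1)).inter_right
    (isClosed_closure.preimage (continuous_shift hX h))).prod isCompact_Icc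

theorem continuousOn_twoPointGap {Ω : Set E} {u : E → ℝ → ℝ} {X : E → E} {h l m : ℝ} (a c : ℝ)
    (hu : ContinuousOn (fun q : E × ℝ => u q.1 q.2) (closure Ω ×ˢ Icc l m)) (hX : Continuous X) :
    ContinuousOn (twoPointGap u X h a c l) (comparisonSet Ω X h l m) := by
  have hy : ContinuousOn (fun q : (E × E) × ℝ => u (shift X h q.1.1 q.1.2) q.2)
      (comparisonSet Ω X h l m) :=
    hu.comp (((continuous_shift hX h).comp continuous_fst).prodMk continuous_snd).continuousOn
      fun q hq => ⟨hq.1.2, hq.2⟩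
  have hx : ContinuousOn (fun q : (E × E) × ℝ => u q.1.1 q.2) (comparisonSet Ω X h l m) :=
    hu.comp ((continuous_fst.comp continuous_fst).prodMk continuous_snd).continuousOn
      fun q hq => ⟨hq.1.1.1, hq.2⟩
  exact (hy.sub (continuousOn_const.mul hx)).sub (by fun_prop)

namespace IsDirichletSolution

variable [FiniteDimensional ℝ E] {Ω : Set E} {T p : ℝ} {u : E → ℝ → ℝ} {G : E → ℝ → E}
  {H : E → ℝ → E →L[ℝ] E} {u' : E → ℝ → ℝ} {ν X : E → E} {D h r M l m : ℝ}

theorem not_isMaxOn_twoPointGap (hu : IsDirichletSolution Ω T p u G H u') (hp : 1 < p)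
    (hΩo : IsOpen Ω) (hX : IsTransversalField Ω ν X D)
    (hh : IsSmallStep p D (twoPointConst E D) r h) (hl : 0 ≤ l) (hm : m ≤ T)
    (hM : ∀ x ∈ Ω, ∀ t ∈ Icc l m, |u' x t| ≤ M) {x e : E} {s c : ℝ}
    (hc : h * (3 * D * M + twoPointConst E D) < c) (he : ‖e‖ = 1) (hx : x ∈ Ω)
    (hy : shift X h x e ∈ Ω) (hs : s ∈ Ioc l m) :
    ¬IsMaxOn (twoPointGap u X h (1 - h * dampingRate p D (twoPointConst E D)) c l)
      (comparisonSet Ω X h l m) ((x, e), s) := fun hmax => by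
  set a := 1 - h * dampingRate p D (twoPointConst E D)
  have hsT : s ∈ Ioc 0 T := ⟨hl.trans_lt hs.1, hs.2.trans hm⟩
  have hspace : IsLocalMaxOn (fun q : E × E => u (shift X h q.1 q.2) s - a * u q.1 s)
      (univ ×ˢ sphere 0 1) (x, e) := by
    have hxnear : ∀ᶠ q : E × E in nhds (x, e), q.1 ∈ Ω :=
      continuous_fst.continuousAt.eventually_mem (hΩo.mem_nhds hx)
    have hynear : ∀ᶠ q : E × E in nhds (x, e), shift X h q.1 q.2 ∈ Ω :=
      (continuous_shift hX.contDiff.continuous h).continuousAt.eventually_mem (hΩo.mem_nhds hy)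
    filter_upwards [nhdsWithin_le_nhds hxnear, nhdsWithin_le_nhds hynear,
      self_mem_nhdsWithin] with q hqx hqy hq
    have := hmax (a := (q, s))
      ⟨⟨⟨subset_closure hqx, hq.2⟩, subset_closure hqy⟩, Ioc_subset_Icc_self hs⟩
    exact (sub_le_sub_iff_right _).1 this
  have hgap := hu.time_derivative_le_of_isLocalMaxOn hp hX hh hsT he hx hy
    (hM _ hy s (Ioc_subset_Icc_self hs)) hspace
  have htime : 0 ≤ u' (shift X h x e) s - a * u' x s - c * 1 :=
    nonneg_of_hasDerivAt_of_forall_le hs.1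
      (((hu.hasDerivAt s hsT _ hy).sub ((hu.hasDerivAt s hsT x hx).const_mul a)).sub
        (((hasDerivAt_id s).sub_const l).const_mul c))
      fun t ht => hmax (a := ((x, e), t)) ⟨⟨⟨subset_closure hx, mem_sphere_zero_iff_norm.2 he⟩,
        subset_closure hy⟩, ht.1, ht.2.trans hs.2⟩
  linarith

theorem twoPointGap_le (hu : IsDirichletSolution Ω T p u G H u') (hp : 1 < p) (hΩo : IsOpen Ω)
    (hΩb : Bornology.IsBounded Ω) (hΩ : HasTwoSidedBalls Ω ν r) (hne : (frontier Ω).Nonempty)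
    (hX : IsTransversalField Ω ν X D) (hh : IsSmallStep p D (twoPointConst E D) r h) (hl : 0 ≤ l)
    (hm : m ≤ T) (hM : ∀ x ∈ Ω, ∀ t ∈ Icc l m, |u' x t| ≤ M) {c k : ℝ}
    (hc : h * (3 * D * M + twoPointConst E D) < c)
    (hk : ∀ q ∈ comparisonSet Ω X h l m, q.2 = l ∨ shift X h q.1.1 q.1.2 ∈ frontier Ω →
      twoPointGap u X h (1 - h * dampingRate p D (twoPointConst E D)) c l q ≤ k)
    {q : (E × E) × ℝ} (hq : q ∈ comparisonSet Ω X h l m) :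
    twoPointGap u X h (1 - h * dampingRate p D (twoPointConst E D)) c l q ≤ k := by
  have hXc := hX.contDiff.continuous
  obtain ⟨⟨⟨x, e⟩, s⟩, hxes, hmax⟩ := (isCompact_comparisonSet hΩb hXc h l m).exists_isMaxOn ⟨q, hq⟩
    (continuousOn_twoPointGap _ c
      (hu.continuousOn.mono (prod_mono_right (Icc_subset_Icc hl hm))) hXc)
  refine (hmax hq).trans (hk _ hxes ?_)
  by_contra! hint
  have he : ‖e‖ = 1 := mem_sphere_zero_iff_norm.1 hxes.1.1.2
  have hx : x ∈ Ω := by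
    simpa [shift] using hX.shift_mem hΩ hΩo hne hh.mul_bound_le hh.lt_radius he hxes.1.2
      (left_mem_Ico.2 hh.pos)
  have hy : shift X h x e ∈ Ω := by
    by_contra hyΩ
    exact hint.2 (hΩo.frontier_eq ▸ ⟨hxes.1.2, hyΩ⟩)
  exact hu.not_isMaxOn_twoPointGap hp hΩo hX hh hl hm hM hc he hx hy
    ⟨hxes.2.1.lt_of_ne' hint.1, hxes.2.2⟩ hmax

end IsDirichletSolution

end DifferenceQuotient

section BoundaryBounds

variable {E : Type*} [NormedAddCommGroup E] [InnerProductSpace ℝ E]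

theorem abs_sub_le_of_forall_hasGradientAt [CompleteSpace E] {Ω : Set E} {U : E → ℝ} {P : E → E}
    {k h : ℝ} {x v : E} (hU : ContinuousOn U (closure Ω)) (hP : ∀ z ∈ Ω, HasGradientAt U (P z) z)
    (hk : ∀ z ∈ Ω, ‖P z‖ ≤ k) (hh : 0 ≤ h) (hseg : ∀ s ∈ Ico 0 h, x - s • v ∈ Ω)
    (hend : x - h • v ∈ closure Ω) : |U (x - h • v) - U x| ≤ k * ‖v‖ * h := by
  have hline (s : ℝ) : HasDerivAt (fun s : ℝ => x - s • v) (-v) s := by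
    simpa using ((hasDerivAt_id s).smul_const v).const_sub x
  have hcont : ContinuousOn (fun s : ℝ => U (x - s • v)) (Icc 0 h) := by
    refine hU.comp (by fun_prop) fun s hs => ?_
    rcases hs.2.eq_or_lt with rfl | hlt
    · exact hend
    · exact subset_closure (hseg s ⟨hs.1, hlt⟩)
  have hderiv (s : ℝ) (hs : s ∈ Ico 0 h) : HasDerivWithinAt (fun s : ℝ => U (x - s • v))
      ⟪P (x - s • v), -v⟫ (Ici s) s := by
    rw [← InnerProductSpace.toDual_apply_apply]
    exact ((hP _ (hseg s hs)).hasFDerivAt.comp_hasDerivAt s (hline s)).hasDerivWithinAt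
  have hbound (s : ℝ) (hs : s ∈ Ico 0 h) : ‖⟪P (x - s • v), -v⟫‖ ≤ k * ‖v‖ := by
    refine (norm_inner_le_norm _ _).trans ?_
    rw [norm_neg]
    gcongr
    exact hk _ (hseg s hs)
  simpa using norm_image_sub_le_of_norm_deriv_right_le_segment hcont hderiv hbound h
    (right_mem_Icc.2 hh)

theorem IsTransversalField.dist_shift_le {Ω : Set E} {ν X : E → E} {D h : ℝ} {x e : E}
    (hX : IsTransversalField Ω ν X D) (hh : 0 ≤ h) (he : ‖e‖ = 1) :
    dist x (shift X h x e) ≤ 2 * h := by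
  rw [shift, dist_self_sub_right, norm_smul_of_nonneg hh, mul_comm]
  gcongr
  linarith [hX.norm_add_half_smul_le (x := x) he]

namespace IsDirichletSolution

variable [FiniteDimensional ℝ E] {Ω : Set E} {T p : ℝ} {u : E → ℝ → ℝ} {G : E → ℝ → E}
  {H : E → ℝ → E →L[ℝ] E} {u' : E → ℝ → ℝ} {ν X : E → E} {D h r M l m t : ℝ}

theorem continuousOn_time (hu : IsDirichletSolution Ω T p u G H u') (ht : t ∈ Icc 0 T) :
    ContinuousOn (fun x => u x t) (closure Ω) :=
  hu.continuousOn.comp (f := fun x => (x, t)) (by fun_prop) fun _ hx => ⟨hx, ht⟩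

theorem exists_abs_le (hu : IsDirichletSolution Ω T p u G H u') (hΩb : Bornology.IsBounded Ω) :
    ∃ k, ∀ x ∈ closure Ω, ∀ t ∈ Icc 0 T, |u x t| ≤ k := by
  obtain ⟨k, hk⟩ := (hΩb.isCompact_closure.prod isCompact_Icc).exists_bound_of_continuousOn
    hu.continuousOn
  exact ⟨k, fun x hx t ht => hk (x, t) ⟨hx, ht⟩⟩

theorem exists_norm_gradient_le (hu : IsDirichletSolution Ω T p u G H u')
    (hΩb : Bornology.IsBounded Ω) (hl : l < T) :
    ∃ k, ∀ x ∈ closure Ω, ∀ t ∈ Icc 0 l, ‖G x t‖ ≤ k := by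
  obtain ⟨k, hk⟩ := (hΩb.isCompact_closure.prod isCompact_Icc).exists_bound_of_continuousOn
    (hu.continuousOn_gradient.mono (prod_mono_right (Icc_subset_Ico_right hl)))
  exact ⟨k, fun x hx t ht => hk (x, t) ⟨hx, ht⟩⟩

theorem exists_forall_neg_mul_dist_le (hu : IsDirichletSolution Ω T p u G H u')
    (hΩo : IsOpen Ω) (hΩb : Bornology.IsBounded Ω) (hΩ : HasTwoSidedBalls Ω ν r) (hl : 0 < l)
    (hM : ∀ x ∈ Ω, ∀ t ∈ Ico l T, |u' x t| ≤ M) : ∃ k, 0 ≤ k ∧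
      ∀ b ∈ frontier Ω, ∀ t ∈ Ico l T, ∀ x ∈ closure Ω, -(k * dist x b) ≤ u x t := by
  obtain ⟨k, hk₀, hk⟩ := exists_forall_neg_mul_dist_le_of_trace_le hΩo hΩb hΩ.pos M
  refine ⟨k, hk₀, fun b hb t ht x hx => ?_⟩
  have ht' : t ∈ Ioc 0 T := ⟨hl.trans_le ht.1, ht.2.le⟩
  refine hk b hb (hΩ.hasExteriorBall hb) _ _ _ (hu.continuousOn_time (Ioc_subset_Icc_self ht'))
    (fun y hy => (hu.eq_zero y hy t (Ioc_subset_Icc_self ht')).ge) (hu.hasHessianAt t ht')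
    (fun y hy => ?_) x hx
  have hpow := Real.rpow_nonneg (norm_nonneg (G y t)) p
  linarith [hu.equation t ht' y hy, le_of_abs_le (hM y hy t ht)]

theorem twoPointGap_le_of_shift_mem_frontier (hu : IsDirichletSolution Ω T p u G H u')
    (hX : IsTransversalField Ω ν X D) {a c k : ℝ} (ha : 0 ≤ a) (ha₁ : a ≤ 1) (hc : 0 ≤ c)
    (hk₀ : 0 ≤ k) (hh : 0 ≤ h) (hl : 0 ≤ l) (hm : m ≤ T)
    (hk : ∀ b ∈ frontier Ω, ∀ t ∈ Icc l m, ∀ x ∈ closure Ω, -(k * dist x b) ≤ u x t)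
    {q : (E × E) × ℝ} (hq : q ∈ comparisonSet Ω X h l m)
    (hqF : shift X h q.1.1 q.1.2 ∈ frontier Ω) : twoPointGap u X h a c l q ≤ h * (2 * k) := by
  have hdist := hX.dist_shift_le hh (mem_sphere_zero_iff_norm.1 hq.1.1.2) (x := q.1.1)
  have hux : -u q.1.1 q.2 ≤ k * (2 * h) := by
    linarith [hk _ hqF q.2 hq.2 q.1.1 hq.1.1.1, mul_le_mul_of_nonneg_left hdist hk₀]
  calc twoPointGap u X h a c l q = a * -u q.1.1 q.2 - c * (q.2 - l) := by
        rw [twoPointGap, hu.eq_zero _ hqF q.2 ⟨hl.trans hq.2.1, hq.2.2.trans hm⟩]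
        ring
    _ ≤ a * (k * (2 * h)) - 0 := by
        gcongr
        exact mul_nonneg hc (sub_nonneg.2 hq.2.1)
    _ ≤ 1 * (k * (2 * h)) := by
        rw [sub_zero]
        gcongr
    _ = h * (2 * k) := by ring

theorem twoPointGap_le_of_eq_left (hu : IsDirichletSolution Ω T p u G H u') (hΩo : IsOpen Ω)
    (hΩ : HasTwoSidedBalls Ω ν r) (hne : (frontier Ω).Nonempty) (hX : IsTransversalField Ω ν X D)
    {B C c k k' : ℝ} (hh : IsSmallStep p D C r h) (hl : l ∈ Ioc 0 T)
    (hk : ∀ x ∈ Ω, ‖G x l‖ ≤ k) (hk' : ∀ x ∈ closure Ω, |u x l| ≤ k') (hB : 0 ≤ B)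
    {q : (E × E) × ℝ} (hq : q ∈ comparisonSet Ω X h l m) (hql : q.2 = l) :
    twoPointGap u X h (1 - h * B) c l q ≤ h * (2 * k + B * k') := by
  obtain ⟨⟨x, e⟩, t⟩ := q
  obtain rfl : t = l := hql
  have he : ‖e‖ = 1 := mem_sphere_zero_iff_norm.1 hq.1.1.2
  have hseg (s : ℝ) (hs : s ∈ Ico 0 h) : shift X s x e ∈ Ω :=
    hX.shift_mem hΩ hΩo hne hh.mul_bound_le hh.lt_radius he hq.1.2 hs
  have hk₀ : 0 ≤ k := (norm_nonneg _).trans (hk _ (hseg 0 (left_mem_Ico.2 hh.pos)))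
  have hincr : |u (shift X h x e) t - u x t| ≤ k * ‖X x + (1 / 2 : ℝ) • e‖ * h :=
    abs_sub_le_of_forall_hasGradientAt (hu.continuousOn_time (Ioc_subset_Icc_self hl))
      (fun z hz => (hu.hasHessianAt t hl z hz).1.self_of_nhds) hk hh.pos.le hseg hq.1.2
  calc twoPointGap u X h (1 - h * B) c t ((x, e), t)
      = (u (shift X h x e) t - u x t) + h * (B * u x t) := by
        simp only [twoPointGap]
        ring
    _ ≤ k * 2 * h + h * (B * k') := by
        have hη : ‖X x + (1 / 2 : ℝ) • e‖ ≤ 2 := by linarith [hX.norm_add_half_smul_le (x := x) he]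
        have := hh.pos
        gcongr
        · exact (le_of_abs_le hincr).trans (by gcongr)
        · exact le_of_abs_le (hk' x hq.1.1.1)
    _ = h * (2 * k + B * k') := by ring

end IsDirichletSolution

end BoundaryBounds

section NormalDerivative

variable {E : Type*} [NormedAddCommGroup E] [InnerProductSpace ℝ E]

theorem neg_le_inner_of_eventually_sub_le [CompleteSpace E] {U : E → ℝ} {g x v : E} {K : ℝ}
    (hU : HasGradientAt U g x)
    (h : ∀ᶠ s in nhdsWithin (0 : ℝ) (Ioi 0), U (x - s • v) - U x ≤ s * K) : -K ≤ ⟪g, v⟫ := by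
  have hderiv : HasDerivAt (fun s : ℝ => U (x - s • v)) (-⟪g, v⟫) 0 := by
    have hline : HasDerivAt (fun s : ℝ => x - s • v) (-v) 0 := by
      simpa using ((hasDerivAt_id (0 : ℝ)).smul_const v).const_sub x
    rw [← inner_neg_right, ← InnerProductSpace.toDual_apply_apply]
    exact HasFDerivAt.comp_hasDerivAt_of_eq 0 hU.hasFDerivAt hline (by simp)
  have hslope := (hasDerivWithinAt_iff_tendsto_slope' self_notMem_Ioi).1 hderiv.hasDerivWithinAt
  have hle : -⟪g, v⟫ ≤ K := by
    refine le_of_tendsto hslope ?_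
    filter_upwards [h, self_mem_nhdsWithin] with s hs hs₀
    simpa [slope_def_field, div_le_iff₀ (mem_Ioi.1 hs₀), mul_comm K] using hs
  linarith

namespace IsDirichletSolution

variable [FiniteDimensional ℝ E] {Ω : Set E} {T p : ℝ} {u : E → ℝ → ℝ} {G : E → ℝ → E}
  {H : E → ℝ → E →L[ℝ] E} {u' : E → ℝ → ℝ} {ν X : E → E} {D r M l t K : ℝ}

theorem exists_eventually_twoPointGap_le (hu : IsDirichletSolution Ω T p u G H u') (hp : 1 < p)
    (hΩo : IsOpen Ω) (hΩb : Bornology.IsBounded Ω) (hΩ : HasTwoSidedBalls Ω ν r)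
    (hne : (frontier Ω).Nonempty) (hX : IsTransversalField Ω ν X D) (hl : l ∈ Ioo 0 T) (hM₀ : 0 ≤ M)
    (hM : ∀ x ∈ Ω, ∀ t ∈ Ico l T, |u' x t| ≤ M) :
    ∃ k, ∀ᶠ h in nhdsWithin 0 (Ioi 0), ∀ m ∈ Ico l T, ∀ q ∈ comparisonSet Ω X h l m,
        twoPointGap u X h (1 - h * dampingRate p D (twoPointConst E D))
          (h * (3 * D * M + twoPointConst E D + 1)) l q ≤ h * k := by
  obtain ⟨k₀, hk₀, hbarrier⟩ := hu.exists_forall_neg_mul_dist_le hΩo hΩb hΩ hl.1 hM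
  obtain ⟨k₁, hk₁⟩ := hu.exists_norm_gradient_le hΩb hl.2
  obtain ⟨k₂, hk₂⟩ := hu.exists_abs_le hΩb
  have hD := hX.nonneg
  have hC := twoPointConst_nonneg (E := E) hD
  have hB := dampingRate_nonneg hp hD hC
  refine ⟨max (2 * k₁ + dampingRate p D (twoPointConst E D) * k₂) (2 * k₀), ?_⟩
  filter_upwards [eventually_isSmallStep p D (twoPointConst E D) hΩ.pos] with h hh m hm q hq
  have hh₀ := hh.pos
  refine hu.twoPointGap_le hp hΩo hΩb hΩ hne hX hh hl.1.le hm.2.le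
    (fun x hx t ht => hM x hx t ⟨ht.1, ht.2.trans_lt hm.2⟩)
    (mul_lt_mul_of_pos_left (lt_add_one _) hh₀) (fun q hq hqb => ?_) hq
  rcases hqb with hql | hqF
  · exact (hu.twoPointGap_le_of_eq_left hΩo hΩ hne hX hh (Ioo_subset_Ioc_self hl)
      (fun x hx => hk₁ x (subset_closure hx) l ⟨hl.1.le, le_rfl⟩)
      (fun x hx => hk₂ x hx l (Ioo_subset_Icc_self hl)) hB hq hql).trans
      (mul_le_mul_of_nonneg_left (le_max_left _ _) hh₀.le)
  · exact (hu.twoPointGap_le_of_shift_mem_frontier hX (sub_nonneg.2 hh.mul_dampingRate_lt_one.le)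
      (sub_le_self _ (mul_nonneg hh₀.le hB)) (by positivity) hk₀ hh₀.le hl.1.le hm.2.le
      (fun b hb t ht => hbarrier b hb t ⟨ht.1, ht.2.trans_lt hm.2⟩) hq hqF).trans
      (mul_le_mul_of_nonneg_left (le_max_right _ _) hh₀.le)

theorem exists_eventually_sub_le (hu : IsDirichletSolution Ω T p u G H u') (hp : 1 < p)
    (hΩo : IsOpen Ω) (hΩb : Bornology.IsBounded Ω) (hΩ : HasTwoSidedBalls Ω ν r)
    (hne : (frontier Ω).Nonempty) (hX : IsTransversalField Ω ν X D) (hl : l ∈ Ioo 0 T)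
    (hM : ∀ x ∈ Ω, ∀ t ∈ Ico l T, |u' x t| ≤ M) :
    ∃ K, ∀ᶠ h in nhdsWithin 0 (Ioi 0), ∀ t ∈ Ico l T, ∀ x ∈ closure Ω, ∀ e, ‖e‖ = 1 →
      shift X h x e ∈ closure Ω → u (shift X h x e) t - u x t ≤ h * K := by
  obtain ⟨z, hz⟩ := closure_nonempty_iff.1 (hne.mono frontier_subset_closure)
  have hM₀ : 0 ≤ M := (abs_nonneg _).trans (hM z hz l ⟨le_rfl, hl.2⟩)
  obtain ⟨k, hk⟩ := hu.exists_eventually_twoPointGap_le hp hΩo hΩb hΩ hne hX hl hM₀ hM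
  obtain ⟨k₂, hk₂⟩ := hu.exists_abs_le hΩb
  have hD := hX.nonneg
  have hC := twoPointConst_nonneg (E := E) hD
  set B := dampingRate p D (twoPointConst E D)
  set A := 3 * D * M + twoPointConst E D + 1
  have hB : 0 ≤ B := dampingRate_nonneg hp hD hC
  have : 0 ≤ A := by positivity
  refine ⟨k + A * T + B * k₂, ?_⟩
  filter_upwards [hk, self_mem_nhdsWithin] with h hk hh₀ t ht x hx e he hy
  have hh₀ : 0 ≤ h := (mem_Ioi.1 hh₀).le
  calc u (shift X h x e) t - u x t
      = twoPointGap u X h (1 - h * B) (h * A) l ((x, e), t) +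
          h * (A * (t - l)) + h * (B * -u x t) := by
        simp only [twoPointGap]
        ring
    _ ≤ h * k + h * (A * T) + h * (B * k₂) := by
        gcongr
        · exact hk t ht _ ⟨⟨⟨hx, mem_sphere_zero_iff_norm.2 he⟩, hy⟩, ht.1, le_rfl⟩
        · linarith [hl.1, ht.2]
        · exact (neg_le_abs _).trans (hk₂ x hx t ⟨hl.1.le.trans ht.1, ht.2.le⟩)
    _ = h * (k + A * T + B * k₂) := by ring

theorem neg_four_mul_abs_le_inner_normal (hu : IsDirichletSolution Ω T p u G H u')
    (hΩo : IsOpen Ω) (hΩ : HasTwoSidedBalls Ω ν r) (hX : IsTransversalField Ω ν X D)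
    (hK : ∀ᶠ h in nhdsWithin 0 (Ioi 0), ∀ x ∈ closure Ω, ∀ e, ‖e‖ = 1 →
      shift X h x e ∈ closure Ω → u (shift X h x e) t - u x t ≤ h * K)
    (ht : t ∈ Ioc 0 T) {x b : E} (hx : x ∈ Ω) (hb : b ∈ frontier Ω) (hxb : D * dist x b ≤ 1 / 8) :
    -(4 * |K|) ≤ ⟪G x t, ν b⟫ := by
  have hclose : ‖X x - ν b‖ ≤ 1 / 4 := by
    rw [dist_eq_norm] at hxb
    linarith [norm_sub_le_norm_sub_add_norm_sub (X x) (X b) (ν b), hX.norm_sub_le x b,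
      hX.norm_sub_normal_le b hb]
  obtain ⟨c, hc, hce⟩ := exists_norm_smul_sub_eq_half (hΩ.norm_eq_one b hb) hclose
  set e : E := (2 : ℝ) • (c • ν b - X x)
  have he : ‖e‖ = 1 := by
    rw [norm_smul, hce]
    norm_num
  have hshift (h : ℝ) : shift X h x e = x - h • c • ν b := by
    simp only [shift, e]
    module
  have hmem : ∀ᶠ h in nhdsWithin (0 : ℝ) (Ioi 0), x - h • c • ν b ∈ Ω := by
    have hcont : ContinuousAt (fun h : ℝ => x - h • c • ν b) 0 := by fun_prop
    exact nhdsWithin_le_nhds (hcont.eventually_mem (hΩo.mem_nhds (by simpa using hx)))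
  have hinner : -K ≤ ⟪G x t, c • ν b⟫ := by
    refine neg_le_inner_of_eventually_sub_le (hu.hasHessianAt t ht x hx).1.self_of_nhds ?_
    filter_upwards [hK, hmem] with h hh hxh
    rw [← hshift] at hxh ⊢
    exact hh x (subset_closure hx) e he (subset_closure hxh)
  rw [inner_smul_right] at hinner
  by_contra! hlt
  nlinarith [hc.1, le_abs_self K, abs_nonneg K]

theorem exists_norm_gradient_le_of_le_infDist (hu : IsDirichletSolution Ω T p u G H u')
    (hΩo : IsOpen Ω) (hΩb : Bornology.IsBounded Ω) (hl : 0 < l) {d : ℝ} (hd : 0 < d) :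
    ∃ k, ∀ x ∈ Ω, d ≤ infDist x (frontier Ω) → ∀ t ∈ Icc l T, ‖G x t‖ ≤ k := by
  have hsub : closure Ω ∩ {x | d ≤ infDist x (frontier Ω)} ⊆ Ω := fun x ⟨hx, hxd⟩ => by
    by_contra hxΩ
    have := infDist_zero_of_mem (hΩo.frontier_eq ▸ ⟨hx, hxΩ⟩ : x ∈ frontier Ω)
    exact hd.not_ge (this ▸ hxd)
  have hcompact : IsCompact (closure Ω ∩ {x | d ≤ infDist x (frontier Ω)}) :=
    hΩb.isCompact_closure.inter_right (isClosed_le continuous_const (continuous_infDist_pt _))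
  obtain ⟨k, hk⟩ := (hcompact.prod isCompact_Icc).exists_bound_of_continuousOn
    (hu.continuousOn_gradient_interior.mono
      (prod_mono hsub fun _ ht => ⟨hl.trans_le ht.1, ht.2⟩))
  exact ⟨k, fun x hx hxd t ht => hk (x, t) ⟨⟨subset_closure hx, hxd⟩, ht⟩⟩

end IsDirichletSolution

theorem stmt6_general [FiniteDimensional ℝ E] {Ω : Set E} {T p : ℝ} {u : E → ℝ → ℝ} {G : E → ℝ → E}
    {H : E → ℝ → E →L[ℝ] E} {u' : E → ℝ → ℝ} {ν : E → E} {r M l : ℝ}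
    (hu : IsDirichletSolution Ω T p u G H u') (hp : 1 < p) (hΩo : IsOpen Ω)
    (hΩb : Bornology.IsBounded Ω) (hΩ : HasTwoSidedBalls Ω ν r) (hl : l ∈ Ioo 0 T)
    (hM : ∀ x ∈ Ω, ∀ t ∈ Ico l T, |u' x t| ≤ M) :
    ∃ K > 0, ∀ x ∈ Ω, ∀ b ∈ frontier Ω, dist x b = infDist x (frontier Ω) →
      ∀ t ∈ Ioo 0 T, -K ≤ ⟪G x t, ν b⟫ := by
  rcases (frontier Ω).eq_empty_or_nonempty with hF | hne
  · exact ⟨1, one_pos, by simp [hF]⟩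
  obtain ⟨X, D, hX⟩ := hΩ.exists_isTransversalField hΩb
  have hD := hX.nonneg
  have hd : 0 < 1 / (8 * (D + 1)) := by positivity
  obtain ⟨K, hK⟩ := hu.exists_eventually_sub_le hp hΩo hΩb hΩ hne hX hl hM
  obtain ⟨k₁, hk₁⟩ := hu.exists_norm_gradient_le hΩb hl.2
  obtain ⟨k₂, hk₂⟩ := hu.exists_norm_gradient_le_of_le_infDist hΩo hΩb hl.1 hd
  refine ⟨4 * |K| + |k₁| + |k₂| + 1, by positivity, fun x hx b hb hxb t ht => ?_⟩
  have hnorm : -‖G x t‖ ≤ ⟪G x t, ν b⟫ := by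
    simpa [hΩ.norm_eq_one b hb] using neg_le_of_abs_le (abs_real_inner_le_norm (G x t) (ν b))
  have hKnn := abs_nonneg K
  have hk₁nn := abs_nonneg k₁
  have hk₂nn := abs_nonneg k₂
  rcases lt_or_ge t l with htl | htl
  · linarith [hk₁ x (subset_closure hx) t ⟨ht.1.le, htl.le⟩, le_abs_self k₁]
  rcases le_or_gt (1 / (8 * (D + 1))) (dist x b) with hfar | hnear
  · linarith [hk₂ x hx (hxb ▸ hfar) t ⟨htl, ht.2.le⟩, le_abs_self k₂]
  · have hDxb : D * dist x b ≤ 1 / 8 := by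
      rw [lt_div_iff₀ (by positivity)] at hnear
      linarith [dist_nonneg (x := x) (y := b)]
    linarith [hu.neg_four_mul_abs_le_inner_normal hΩo hΩ hX (hK.mono fun h hh => hh t ⟨htl, ht.2⟩)
      (Ioo_subset_Ioc_self ht) hx hb hDxb]

end NormalDerivative

theorem stmt6 {n : ℕ} (hn : 1 ≤ n)
    -- the exponents and constants
    (p β cp dp : ℝ) (hp : 2 < p) (hβ : β = 1 / (p - 1))
    (hcp : cp = β ^ β / (1 - β)) (hdp : dp = β ^ β)
    -- the bounded domain Ω with C² boundary
    (Ω : Set (EuclideanSpace ℝ (Fin n))) (hΩo : IsOpen Ω) (hΩb : Bornology.IsBounded Ω) (hΩc2 : IsC2Boundary Ω)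
    -- the distance to the boundary
    (δ : EuclideanSpace ℝ (Fin n) → ℝ) (hδ : ∀ x, δ x = infDist x (frontier Ω))
    -- δ₀ and the boundary neighborhood Ωδ = {x ∈ Ω : δ(x) < δ₀}
    (δ₀ : ℝ) (hδ₀ : 0 < δ₀)
    (Ωδ : Set (EuclideanSpace ℝ (Fin n))) (hΩδ : Ωδ = {x ∈ Ω | δ x < δ₀})
    -- δ is C² on Ωδ
    (hδC2 : ContDiffOn ℝ 2 δ Ωδ)
    -- every x ∈ Ωδ has a unique nearest boundary point P x
    (P : EuclideanSpace ℝ (Fin n) → EuclideanSpace ℝ (Fin n))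
    (hP : ∀ x ∈ Ωδ, P x ∈ frontier Ω ∧ dist x (P x) = δ x ∧
      ∀ b ∈ frontier Ω, dist x b = δ x → b = P x)
    -- interior sphere condition of radius δ₀ at every boundary point
    (hsph : ∀ b ∈ frontier Ω, ∃ y, ball y δ₀ ⊆ Ω ∧ dist y b = δ₀)
    -- the inward unit normal field ν
    (ν : EuclideanSpace ℝ (Fin n) → EuclideanSpace ℝ (Fin n))
    (hν1 : ∀ b ∈ frontier Ω, ‖ν b‖ = 1 ∧
      ∀ s ∈ Ioo (0 : ℝ) δ₀, b + s • ν b ∈ Ω ∧ δ (b + s • ν b) = s)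
    (hν2 : ∀ x ∈ Ωδ, ν x = ν (P x) ∧ HasGradientAt δ (ν x) x)
    -- the solution u on [0,T], with spatial gradient G, spatial Hessian H and
    -- time derivative u'
    (T : ℝ) (hT : 0 < T)
    (u : EuclideanSpace ℝ (Fin n) → ℝ → ℝ)
    (G : EuclideanSpace ℝ (Fin n) → ℝ → EuclideanSpace ℝ (Fin n))
    (H : EuclideanSpace ℝ (Fin n) → ℝ → (EuclideanSpace ℝ (Fin n) →L[ℝ] EuclideanSpace ℝ (Fin n)))
    (u' : EuclideanSpace ℝ (Fin n) → ℝ → ℝ)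
    -- u is continuous on Ω̄ × [0,T] and vanishes on ∂Ω × [0,T]
    (hu_cont : ContinuousOn (fun q : EuclideanSpace ℝ (Fin n) × ℝ => u q.1 q.2) (closure Ω ×ˢ Icc 0 T))
    (hu_bd : ∀ b ∈ frontier Ω, ∀ t ∈ Icc (0 : ℝ) T, u b t = 0)
    -- u is continuously differentiable in x on Ω̄ × [0,T), with spatial gradient G
    (hG : ∀ t ∈ Ico (0 : ℝ) T, ∀ x ∈ closure Ω,
      HasGradientWithinAt (fun y => u y t) (G x t) (closure Ω) x)
    (hG_cont : ContinuousOn (fun q : EuclideanSpace ℝ (Fin n) × ℝ => G q.1 q.2) (closure Ω ×ˢ Ico 0 T))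
    -- on Ω × (0,T], u has spatial gradient G, spatial Hessian H and time derivative u',
    -- all continuous there
    (hG2 : ∀ t ∈ Ioc (0 : ℝ) T, ∀ x ∈ Ω, HasGradientAt (fun y => u y t) (G x t) x)
    (hH : ∀ t ∈ Ioc (0 : ℝ) T, ∀ x ∈ Ω, HasFDerivAt (fun y => G y t) (H x t) x)
    (hu' : ∀ t ∈ Ioc (0 : ℝ) T, ∀ x ∈ Ω, HasDerivAt (fun s => u x s) (u' x t) t)
    (hreg : ContinuousOn (fun q : EuclideanSpace ℝ (Fin n) × ℝ =>
      (u q.1 q.2, G q.1 q.2, H q.1 q.2, u' q.1 q.2)) (Ω ×ˢ Ioc 0 T))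
    -- the PDE uₜ - Δu = |∇u|^p on Ω × (0,T]
    (hPDE : ∀ t ∈ Ioc (0 : ℝ) T, ∀ x ∈ Ω,
      u' x t - ∑ i : Fin n, ⟪H x t (EuclideanSpace.single i (1 : ℝ)),
        EuclideanSpace.single i (1 : ℝ)⟫ = ‖G x t‖ ^ p)
    -- a priori bounds: |uₜ| ≤ M on Ω × [T/2,T] and the Bernstein estimate
    (M : ℝ) (hM : ∀ x ∈ Ω, ∀ t ∈ Icc (T / 2) T, |u' x t| ≤ M)
    (C₀ : ℝ) (hC₀ : ∀ x ∈ Ω, ∀ t ∈ Ico (0 : ℝ) T, ‖G x t‖ ≤ C₀ * ((δ x) ^ (-β) + 1))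
    :
    ∃ K > 0, ∀ x ∈ Ωδ, ∀ t ∈ Ioo (0 : ℝ) T, -K ≤ ⟪G x t, ν x⟫ := by
  obtain rfl : δ = fun x => infDist x (frontier Ω) := funext hδ
  subst hΩδ
  have hu : IsDirichletSolution Ω T p u G H u' := .of_euclideanSpace hΩo hu_cont
    hu_bd hG_cont hreg.snd.fst hG2 hH hu' hPDE
  obtain ⟨r, hΩ⟩ := hΩc2.exists_hasTwoSidedBalls hΩo hΩb hδ₀ hν1
  obtain ⟨K, hK, hbound⟩ := stmt6_general hu (by linarith) hΩo hΩb hΩ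
    ⟨half_pos hT, half_lt_self hT⟩ fun x hx t ht => hM x hx t (Ico_subset_Icc_self ht)
  refine ⟨K, hK, fun x hx t ht => ?_⟩
  obtain ⟨hPx, hdist, -⟩ := hP x hx
  exact (hν2 x hx).1 ▸ hbound x hx.1 (P x) hPx hdist t ht
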